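/- arXiv:0909.0358 — 16 statements merged into one kernel-verified Lean document; each statement's English description precedes it below -/
import Mathlib

section
/- Suppose the family (a_p) satisfies the level-0 recursion with respect to λ and μ. Then: (i) for all i ≠ j in {1,…,N}, μ_i^{(j)}·λ_j = μ_j^{(i)}·λ_i; (ii) for all i ≠ j in {1,…,N} and every k with λ_k ≠ 0, μ_i^{(j)}·μ_j^{(k)} = μ_j^{(i)}·μ_i^{(k)}; (iii) for every k with λ_k = 0 and every multi-index p with p_k ≥ 1, a_p = 0. -/
/-!
Write `L j p = lam j + ∑ l, mu j l * p l`. Reaching `p + ε_i + ε_j` from `p` in the two possible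
orders, and cancelling the common denominator `(p i + 1) (p j + 1)` and the symmetric term
`L i p * L j p`, gives `mu i j * L j p * a p = mu j i * L i p * a p` for `i ≠ j`
(`level_zero_compat`).
At `p = 0` this is (i); at `p = ε_k`, where `a ε_k = lam k`, it is (ii) once (i) is subtracted.
For (iii), `a ε_k = lam k = 0`, and a zero of `a` propagates upwards along the recursion to every
multi-index above `ε_k`.
-/

/-- Compatibility of the two ways of computing `a (p + ε_i + ε_j)`. -/
theorem level_zero_compat {K : Type*} [Field K] [CharZero K] {N : ℕ}
    (lam : Fin N → K) (mu : Fin N → Fin N → K) (a : (Fin N → ℕ) → K)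
    (hrec : ∀ (p : Fin N → ℕ) (j : Fin N),
      a (p + Pi.single j 1) =
        (1 / ((p j : K) + 1)) * (lam j + ∑ l, mu j l * (p l : K)) * a p)
    (p : Fin N → ℕ) (i j : Fin N) (hij : i ≠ j) :
    mu i j * (lam j + ∑ l, mu j l * (p l : K)) * a p =
      mu j i * (lam i + ∑ l, mu i l * (p l : K)) * a p := by
  have hshift : ∀ m n : Fin N,
      ∑ l, mu m l * (((p + Pi.single n 1 : Fin N → ℕ) l : ℕ) : K) =
        (∑ l, mu m l * (p l : K)) + mu m n := by
    intro m n
    simp [Pi.single_apply, mul_add, Finset.sum_add_distrib]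
  have h1 := hrec (p + Pi.single j 1) i
  have h2 := hrec (p + Pi.single i 1) j
  rw [add_right_comm, h2, hrec p i, hrec p j, hshift, hshift] at h1
  have e1 : (p + Pi.single i 1 : Fin N → ℕ) j = p j := by simp [hij.symm]
  have e2 : (p + Pi.single j 1 : Fin N → ℕ) i = p i := by simp [hij]
  rw [e1, e2] at h1
  have hi : (p i : K) + 1 ≠ 0 := Nat.cast_add_one_ne_zero _
  have hj : (p j : K) + 1 ≠ 0 := Nat.cast_add_one_ne_zero _
  field_simp at h1
  linear_combination -h1

/-- Properties of families satisfying the level-0 recursion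
`a 0 = 1`, `a (p + ε_j) = (1/(p_j+1)) (λ_j + Σ_l μ_j^{(l)} p_l) a_p`. -/
theorem stmt_0 {K : Type*} [Field K] [CharZero K] {N : ℕ} (hN : 1 ≤ N)
    (lam : Fin N → K) (mu : Fin N → Fin N → K) (a : (Fin N → ℕ) → K)
    (h0 : a 0 = 1)
    (hrec : ∀ (p : Fin N → ℕ) (j : Fin N),
      a (p + Pi.single j 1) =
        (1 / ((p j : K) + 1)) * (lam j + ∑ l, mu j l * (p l : K)) * a p) :
    (∀ i j : Fin N, i ≠ j → mu i j * lam j = mu j i * lam i) ∧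
    (∀ i j k : Fin N, i ≠ j → lam k ≠ 0 → mu i j * mu j k = mu j i * mu i k) ∧
    (∀ (k : Fin N) (p : Fin N → ℕ), lam k = 0 → 1 ≤ p k → a p = 0) := by
  have hsingle : ∀ k, a (Pi.single k 1) = lam k := by
    intro k
    have h := hrec 0 k
    simpa [h0] using h
  have hi : ∀ i j : Fin N, i ≠ j → mu i j * lam j = mu j i * lam i := by
    intro i j hij
    simpa [h0] using level_zero_compat lam mu a hrec 0 i j hij
  refine ⟨hi, ?_, ?_⟩
  · intro i j k hij hk
    have h := level_zero_compat lam mu a hrec (Pi.single k 1) i j hij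
    rw [hsingle] at h
    have h' := mul_right_cancel₀ hk h
    simp only [Pi.single_apply, Nat.cast_ite, Nat.cast_one, Nat.cast_zero, mul_ite, mul_one,
      mul_zero, Finset.sum_ite_eq', Finset.sum_ite_eq, Finset.mem_univ, if_true] at h'
    linear_combination h' - hi i j hij
  · intro k p hk hp
    -- Induction on the degree of `q`, where `p = ε_k + q`.
    have key : ∀ (n : ℕ) (q : Fin N → ℕ), ∑ l, q l = n → a (Pi.single k 1 + q) = 0 := by
      intro n
      induction n with
      | zero =>
        intro q hq
        have hq0 : q = 0 := by
          funext l
          exact Finset.sum_eq_zero_iff.mp hq l (Finset.mem_univ l)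
        rw [hq0, add_zero, hsingle, hk]
      | succ n ih =>
        intro q hq
        obtain ⟨j, -, hj⟩ : ∃ j ∈ Finset.univ, q j ≠ 0 :=
          Finset.exists_ne_zero_of_sum_ne_zero (by omega)
        have hle : Pi.single j 1 ≤ q := by
          intro l
          by_cases h : l = j
          · subst h
            simpa using Nat.one_le_iff_ne_zero.mpr hj
          · simp [h]
        obtain ⟨r, rfl⟩ := exists_add_of_le hle
        have hr : ∑ l, r l = n := by
          simp [Finset.sum_add_distrib] at hq
          omega
        rw [add_comm (Pi.single j 1) r, ← add_assoc, hrec, ih r hr, mul_zero]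
    have hle : Pi.single k 1 ≤ p := by
      intro l
      by_cases h : l = k
      · subst h
        simpa using hp
      · simp [h]
    obtain ⟨q, rfl⟩ := exists_add_of_le hle
    exact key _ q rfl
end

section
/- Let K be a field, I a set, and ν : I × I → K a family of scalars, written ν_i^{(j)}, which is symmetric (ν_i^{(j)} = ν_j^{(i)} for all i, j) and satisfies ν_i^{(j)}·(ν_i^{(k)} − ν_j^{(k)}) = 0 for all i, j, k ∈ I. Then the relation defined by i ∼ j if and only if (i = j or ν_i^{(j)} ≠ 0) is an equivalence relation on I, and whenever i ∼ j one has ν_i^{(k)} = ν_j^{(k)} for every k ∈ I. -/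
/-- The relation `i ∼ j ↔ (i = j ∨ ν_i^{(j)} ≠ 0)` is an equivalence
relation, and related indices have equal rows of ν. -/
theorem stmt_1 {K : Type*} [Field K] [CharZero K] {I : Type*} (ν : I → I → K)
    (hsym : ∀ i j : I, ν i j = ν j i)
    (hrel : ∀ i j k : I, ν i j * (ν i k - ν j k) = 0) :
    Equivalence (fun i j : I => i = j ∨ ν i j ≠ 0) ∧
    (∀ i j : I, (i = j ∨ ν i j ≠ 0) → ∀ k : I, ν i k = ν j k) := by
  have hrow : ∀ i j : I, (i = j ∨ ν i j ≠ 0) → ∀ k : I, ν i k = ν j k := by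
    rintro i j (rfl | h) k
    · rfl
    · exact sub_eq_zero.mp ((mul_eq_zero.mp (hrel i j k)).resolve_left h)
  refine ⟨⟨fun i => Or.inl rfl, ?_, ?_⟩, hrow⟩
  · rintro i j (rfl | h)
    · exact Or.inl rfl
    · exact Or.inr (hsym i j ▸ h)
  · rintro i j k hij (rfl | hjk)
    · exact hij
    -- Rows `i` and `j` agree, so `ν i k = ν j k ≠ 0`.
    · exact Or.inr (by rw [hrow i j hij k]; exact hjk)
end

section
/- Suppose the family (a_p) satisfies the level-0 recursion with respect to λ and μ. Then there exist an integer M ≥ 0, a function c assigning to each index j ∈ {1,…,N} with λ_j ≠ 0 a class c(j) ∈ {1,…,M}, and scalars β_1,…,β_M ∈ K, such that: (i) for all i, j with λ_i ≠ 0 and λ_j ≠ 0, μ_i^{(j)} = λ_i·β_{c(i)} if c(i) = c(j), and μ_i^{(j)} = 0 if c(i) ≠ c(j); (ii) for every multi-index p, a_p = (∏_{l=1}^N λ_l^{p_l}/p_l!)·∏_{m=1}^M ∏_{t=1}^{s_m−1}(1 + t·β_m), where s_m = Σ_{l : λ_l ≠ 0 and c(l) = m} p_l, empty products are equal to 1,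 and 0^0 = 1. -/
/-!
Write `b i j = mu i j / lam i` for indices with `lam i, lam j ≠ 0`. Computing `a (p + ε_i + ε_j)`
in the two possible orders gives, at `p = 0`, the symmetry `mu j i * lam i = mu i j * lam j`, and,
at `p = ε_l`, the relation `b i j * (b i l - b j l) = 0`. So two rows of the symmetric matrix `b`
are equal as soon as their common entry `b i j` is nonzero. Taking as classes the sets of indices
with equal rows, `b` is constant on each diagonal block (by symmetry) and zero off the
diagonal blocks; this is (i). The symmetry also gives `mu i j = 0` when `lam i = 0 ≠ lam j`.

For (ii), the explicit product satisfies the same recursion (`closedForm_rec`), which determines a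
family from its value at `0` (`eq_of_rec`). The product vanishes at every `p` with `p l ≠ 0` for
some `l` with `lam l = 0`, so the entries `mu j l` for these `l`, which (i) leaves free, never
contribute.
-/

open scoped Classical

namespace LevelZero

variable {K : Type*} [Field K] {N : ℕ}

lemma sum_mul_add_single (f : Fin N → K) (p : Fin N → ℕ) (i : Fin N) :
    ∑ l, f l * (((p + Pi.single i 1 : Fin N → ℕ) l : ℕ) : K) = ∑ l, f l * (p l : K) + f i := by
  simp [Pi.single_apply, mul_add, Finset.sum_add_distrib]

/-- The recursion determines a family from its value at `0`. -/
lemma eq_of_rec (A : (Fin N → ℕ) → Fin N → K) (a F : (Fin N → ℕ) → K) (h0 : a 0 = F 0)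
    (ha : ∀ p j, a (p + Pi.single j 1) = A p j * a p)
    (hF : ∀ p j, F (p + Pi.single j 1) = A p j * F p) (p : Fin N → ℕ) : a p = F p := by
  induction hn : ∑ l, p l generalizing p with
  | zero =>
    have : p = 0 := by
      funext l
      simpa using (Finset.sum_eq_zero_iff.1 hn) l (Finset.mem_univ l)
    rw [this, h0]
  | succ n ih =>
    obtain ⟨j, hj⟩ : ∃ j, p j ≠ 0 := by
      by_contra! h
      simp [h] at hn
    obtain ⟨q, rfl⟩ : ∃ q : Fin N → ℕ, p = q + Pi.single j 1 := by
      refine ⟨p - Pi.single j 1, ?_⟩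
      funext l
      by_cases hl : l = j
      · subst hl
        simp
        omega
      · simp [hl]
    have hq : ∑ l, q l = n := by
      simp [Finset.sum_add_distrib] at hn
      exact hn
    rw [ha, hF, ih q hq]

/-- The compatibility condition coming from the two ways of reaching `p + ε_i + ε_j` from `p`. -/
lemma compat [CharZero K] (lam : Fin N → K) (mu : Fin N → Fin N → K) (a : (Fin N → ℕ) → K)
    (hrec : ∀ (p : Fin N → ℕ) (j : Fin N),
      a (p + Pi.single j 1) =
        (1 / ((p j : K) + 1)) * (lam j + ∑ l, mu j l * (p l : K)) * a p)
    (p : Fin N → ℕ) (hp : a p ≠ 0) (i j : Fin N) :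
    mu j i * (lam i + ∑ l, mu i l * (p l : K)) = mu i j * (lam j + ∑ l, mu j l * (p l : K)) := by
  by_cases hij : i = j
  · rw [hij]
  have e1 := hrec (p + Pi.single i 1) j
  have e2 := hrec (p + Pi.single j 1) i
  rw [add_right_comm, e2, sum_mul_add_single, sum_mul_add_single, hrec p i, hrec p j] at e1
  have hi : ((p i : K) + 1) ≠ 0 := Nat.cast_add_one_ne_zero _
  have hj : ((p j : K) + 1) ≠ 0 := Nat.cast_add_one_ne_zero _
  have h1 : (p + Pi.single i 1 : Fin N → ℕ) j = p j := by simp [Ne.symm hij]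
  have h2 : (p + Pi.single j 1 : Fin N → ℕ) i = p i := by simp [hij]
  rw [h1, h2] at e1
  field_simp at e1
  linear_combination -e1

/-- The number `s_m`: the total degree of `p` in the class `m`, over indices with `lam l ≠ 0`. -/
noncomputable def classDeg (lam : Fin N → K) (c : Fin N → ℕ) (p : Fin N → ℕ) (m : ℕ) : ℕ :=
  ∑ l ∈ Finset.univ.filter (fun l => lam l ≠ 0 ∧ c l = m), p l

/-- The coefficient at `p` of the product of the series `f_{β_m}(Σ_{c l = m} lam_l h_l)`. -/
noncomputable def closedForm (lam : Fin N → K) (c : Fin N → ℕ) (M : ℕ) (β : ℕ → K)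
    (p : Fin N → ℕ) : K :=
  (∏ l, lam l ^ (p l) / (Nat.factorial (p l) : K)) *
    ∏ m ∈ Finset.Icc 1 M, ∏ t ∈ Finset.Ico 1 (classDeg lam c p m), (1 + (t : K) * β m)

lemma classDeg_add_single (lam : Fin N → K) (c : Fin N → ℕ) (p : Fin N → ℕ) (j : Fin N) (m : ℕ)
    (hj : lam j ≠ 0) :
    classDeg lam c (p + Pi.single j 1) m = classDeg lam c p m + if c j = m then 1 else 0 := by
  simp [classDeg, Finset.sum_add_distrib, Finset.sum_filter, Pi.single_apply, ite_and]
  simp [hj]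

lemma closedForm_eq_zero (lam : Fin N → K) (c : Fin N → ℕ) (M : ℕ) (β : ℕ → K)
    (p : Fin N → ℕ) (l : Fin N) (hl : lam l = 0) (hp : p l ≠ 0) :
    closedForm lam c M β p = 0 := by
  unfold closedForm
  rw [Finset.prod_eq_zero (Finset.mem_univ l), zero_mul]
  simp [hl, hp]

lemma prod_Ico_succ_one (f : ℕ → K) (hf : f 0 = 1) (s : ℕ) :
    ∏ t ∈ Finset.Ico 1 (s + 1), f t = f s * ∏ t ∈ Finset.Ico 1 s, f t := by
  rcases Nat.eq_zero_or_pos s with rfl | hs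
  · simp [hf]
  · rw [Finset.prod_Ico_succ_top hs, mul_comm]

/-- Raising the exponent of an index `j` with `lam j ≠ 0` only affects the monomial and the class
of `j`. -/
lemma closedForm_add_single [CharZero K] (lam : Fin N → K) (c : Fin N → ℕ) (M : ℕ) (β : ℕ → K)
    (p : Fin N → ℕ) (j : Fin N) (hj : lam j ≠ 0) (hc : c j ∈ Finset.Icc 1 M) :
    closedForm lam c M β (p + Pi.single j 1) =
      (1 / ((p j : K) + 1)) * (lam j * (1 + (classDeg lam c p (c j) : K) * β (c j))) *
        closedForm lam c M β p := by
  have hA : ∏ l, lam l ^ ((p + Pi.single j 1 : Fin N → ℕ) l) /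
        (Nat.factorial ((p + Pi.single j 1 : Fin N → ℕ) l) : K) =
      (lam j / ((p j : K) + 1)) * ∏ l, lam l ^ (p l) / (Nat.factorial (p l) : K) := by
    have : ∀ l, lam l ^ ((p + Pi.single j 1 : Fin N → ℕ) l) /
        (Nat.factorial ((p + Pi.single j 1 : Fin N → ℕ) l) : K) =
        (if l = j then lam j / ((p j : K) + 1) else 1) *
          (lam l ^ (p l) / (Nat.factorial (p l) : K)) := by
      intro l
      by_cases hl : l = j
      · subst hl
        have h1 : ((p l : K) + 1) ≠ 0 := Nat.cast_add_one_ne_zero _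
        have h2 : (Nat.factorial (p l) : K) ≠ 0 := by exact_mod_cast Nat.factorial_ne_zero _
        simp [Nat.factorial_succ, pow_succ]
        field_simp
      · simp [hl]
    rw [Finset.prod_congr rfl (fun l _ => this l), Finset.prod_mul_distrib]
    simp
  have hB : ∏ m ∈ Finset.Icc 1 M, ∏ t ∈ Finset.Ico 1 (classDeg lam c (p + Pi.single j 1) m),
        (1 + (t : K) * β m) =
      (1 + (classDeg lam c p (c j) : K) * β (c j)) *
        ∏ m ∈ Finset.Icc 1 M, ∏ t ∈ Finset.Ico 1 (classDeg lam c p m), (1 + (t : K) * β m) := by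
    have : ∀ m, ∏ t ∈ Finset.Ico 1 (classDeg lam c (p + Pi.single j 1) m),
        (1 + (t : K) * β m) =
        (if c j = m then (1 + (classDeg lam c p (c j) : K) * β (c j)) else 1) *
          ∏ t ∈ Finset.Ico 1 (classDeg lam c p m), (1 + (t : K) * β m) := by
      intro m
      rw [classDeg_add_single _ _ _ _ _ hj]
      by_cases hm : c j = m
      · subst hm
        simp only [if_true]
        exact prod_Ico_succ_one (fun t => 1 + (t : K) * β (c j)) (by simp) _
      · simp [hm]
    rw [Finset.prod_congr rfl (fun m _ => this m), Finset.prod_mul_distrib, Finset.prod_ite_eq,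
      if_pos hc]
  unfold closedForm
  rw [hA, hB]
  ring

/-- The closed form satisfies the level-0 recursion as soon as `mu` has the block structure (i) and
`mu i j = 0` whenever `lam i = 0 ≠ lam j`. -/
lemma closedForm_rec [CharZero K] (lam : Fin N → K) (mu : Fin N → Fin N → K) (c : Fin N → ℕ)
    (M : ℕ) (β : ℕ → K) (hc : ∀ j, lam j ≠ 0 → c j ∈ Finset.Icc 1 M)
    (hmu : ∀ i j : Fin N, lam i ≠ 0 → lam j ≠ 0 →
        (c i = c j → mu i j = lam i * β (c i)) ∧ (c i ≠ c j → mu i j = 0))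
    (hmu0 : ∀ i j, lam i = 0 → lam j ≠ 0 → mu i j = 0) (p : Fin N → ℕ) (j : Fin N) :
    closedForm lam c M β (p + Pi.single j 1) =
      (1 / ((p j : K) + 1)) * (lam j + ∑ l, mu j l * (p l : K)) * closedForm lam c M β p := by
  by_cases hp : ∃ l, lam l = 0 ∧ p l ≠ 0
  · obtain ⟨l, hl, hpl⟩ := hp
    rw [closedForm_eq_zero lam c M β p l hl hpl,
      closedForm_eq_zero lam c M β _ l hl (by simp [hpl]), mul_zero]
  push Not at hp
  by_cases hj : lam j = 0
  · rw [closedForm_eq_zero lam c M β _ j hj (by simp)]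
    have : ∑ l, mu j l * (p l : K) = 0 := by
      refine Finset.sum_eq_zero fun l _ => ?_
      by_cases hl : lam l = 0
      · simp [hp l hl]
      · simp [hmu0 j l hj hl]
    simp [this, hj]
  · rw [closedForm_add_single lam c M β p j hj (hc j hj)]
    have : ∑ l, mu j l * (p l : K) = lam j * ((classDeg lam c p (c j) : K) * β (c j)) := by
      unfold classDeg
      rw [Finset.sum_filter]
      push_cast
      rw [Finset.sum_mul, Finset.mul_sum]
      refine Finset.sum_congr rfl fun l _ => ?_
      by_cases hl : lam l = 0
      · simp [hp l hl]
      · by_cases hcl : c l = c j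
        · rw [(hmu j l hj hl).1 hcl.symm]
          simp [hl, hcl]
          ring
        · rw [(hmu j l hj hl).2 (Ne.symm hcl)]
          simp [hcl]
    rw [this]
    ring

end LevelZero

open LevelZero in
/-- A family satisfying the level-0 recursion is, coefficientwise,
a product of series `f_{β_m}(Σ_{l ∈ I_m} λ_l h_l)`. -/
theorem stmt_2 {K : Type*} [Field K] [CharZero K] {N : ℕ} (hN : 1 ≤ N)
    (lam : Fin N → K) (mu : Fin N → Fin N → K) (a : (Fin N → ℕ) → K)
    (h0 : a 0 = 1)
    (hrec : ∀ (p : Fin N → ℕ) (j : Fin N),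
      a (p + Pi.single j 1) =
        (1 / ((p j : K) + 1)) * (lam j + ∑ l, mu j l * (p l : K)) * a p) :
    ∃ (M : ℕ) (c : Fin N → ℕ) (β : ℕ → K),
      (∀ j : Fin N, lam j ≠ 0 → c j ∈ Finset.Icc 1 M) ∧
      (∀ i j : Fin N, lam i ≠ 0 → lam j ≠ 0 →
        (c i = c j → mu i j = lam i * β (c i)) ∧ (c i ≠ c j → mu i j = 0)) ∧
      (∀ p : Fin N → ℕ,
        a p = (∏ l, lam l ^ (p l) / (Nat.factorial (p l) : K)) *
          ∏ m ∈ Finset.Icc 1 M,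
            ∏ t ∈ Finset.Ico 1
                (∑ l ∈ Finset.univ.filter (fun l => lam l ≠ 0 ∧ c l = m), p l),
              (1 + (t : K) * β m)) := by
  have hsymm : ∀ i j, mu j i * lam i = mu i j * lam j := by
    intro i j
    simpa using compat lam mu a hrec 0 (by simp [h0]) i j
  have hmu0 : ∀ i j, lam i = 0 → lam j ≠ 0 → mu i j = 0 := by
    intro i j hi hj
    have := hsymm i j
    rw [hi, mul_zero] at this
    exact (mul_eq_zero.1 this.symm).resolve_right hj
  -- The normalized matrix, extended by zero to the indices with `lam = 0`, so that it stays
  -- symmetric on all of `Fin N`.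
  let b : Fin N → Fin N → K := fun i j => if lam i = 0 ∨ lam j = 0 then 0 else mu i j / lam i
  have hb : ∀ i j, lam i ≠ 0 → lam j ≠ 0 → mu i j = lam i * b i j := by
    intro i j hi hj
    simp only [b, hi, hj, or_self, if_false]
    field_simp
  have hbs : ∀ i j, b i j = b j i := by
    intro i j
    by_cases hi : lam i = 0
    · simp [b, hi]
    by_cases hj : lam j = 0
    · simp [b, hj]
    have h := hsymm i j
    rw [hb i j hi hj, hb j i hj hi] at h
    exact mul_left_cancel₀ (mul_ne_zero hi hj) (by linear_combination -h)
  have hrow : ∀ i j, lam i ≠ 0 → lam j ≠ 0 → b i j ≠ 0 → b i = b j := by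
    intro i j hi hj hij
    funext l
    by_cases hl : lam l = 0
    · simp [b, hl]
    have hal : a (0 + Pi.single l 1) ≠ 0 := by
      rw [hrec]
      simp [h0, hl]
    have h := compat lam mu a hrec _ hal i j
    rw [sum_mul_add_single, sum_mul_add_single] at h
    simp only [Pi.zero_apply, Nat.cast_zero, mul_zero, Finset.sum_const_zero, zero_add] at h
    rw [hb i l hi hl, hb j l hj hl, hb i j hi hj, hb j i hj hi, hbs j i] at h
    exact mul_left_cancel₀ (mul_ne_zero (mul_ne_zero hi hj) hij) (by linear_combination h)
  -- `g` picks a representative in each class of indices with equal rows.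
  have : Nonempty (Fin N) := ⟨⟨0, hN⟩⟩
  let g : Fin N → Fin N := fun i => Function.invFun b (b i)
  have hg : ∀ i, b (g i) = b i := fun i => Function.invFun_eq ⟨i, rfl⟩
  let c : Fin N → ℕ := fun i => (g i : ℕ) + 1
  let β : ℕ → K := fun m => if h : m - 1 < N then b ⟨m - 1, h⟩ ⟨m - 1, h⟩ else 0
  have hβ : ∀ i, β (c i) = b i i := by
    intro i
    have : β (c i) = b (g i) (g i) := by simp [β, c]
    rw [this, hg, hbs, hg]
  have hc : ∀ j, lam j ≠ 0 → c j ∈ Finset.Icc 1 N := by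
    intro j _
    have := (g j).isLt
    simp only [c, Finset.mem_Icc]
    omega
  have hblock : ∀ i j : Fin N, lam i ≠ 0 → lam j ≠ 0 →
      (c i = c j → mu i j = lam i * β (c i)) ∧ (c i ≠ c j → mu i j = 0) := by
    intro i j hi hj
    refine ⟨fun h => ?_, fun h => ?_⟩
    · have hgij : g i = g j := Fin.ext (by simpa [c] using h)
      have hbij : b i = b j := by rw [← hg i, hgij, hg]
      rw [hβ, hb i j hi hj, hbs i j, hbij]
    · rw [hb i j hi hj]
      by_contra hne
      have hbij := hrow i j hi hj (right_ne_zero_of_mul hne)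
      exact h (by simp only [c, g, hbij])
  refine ⟨N, c, β, hc, hblock, fun p => ?_⟩
  exact eq_of_rec (fun p j => (1 / ((p j : K) + 1)) * (lam j + ∑ l, mu j l * (p l : K))) a
    (closedForm lam c N β) (by simp [h0, closedForm, classDeg]) hrec
    (closedForm_rec lam mu c N β hc hblock hmu0) p
end

section
/- Suppose the family (a_p) satisfies the level-1 recursion with respect to λ, μ and A. If j ∈ {1,…,N} is such that λ_j + μ_j^{(k)} = 0 for every k ∈ {1,…,N}, then a_p = 0 for every multi-index p with |p| ≥ 2 and p_j ≥ 1. -/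
/-!
The hypothesis gives `μ_j^{(l)} = -λ_j` for all `l`, so the factor in the recursion in direction `j`
is `λ_j (1 - |p|)`, which vanishes when `|p| = 1`. Hence `a_{s + ε_j} = 0` whenever `|s| = 1`.
If `|s| ≥ 2`, write `s = t + ε_k`; then `s + ε_j = (t + ε_j) + ε_k`, and the recursion in
direction `k` makes `a_{s + ε_j}` a multiple of `a_{t + ε_j}`, so the vanishing propagates by
induction on `|s|`.
-/

theorem eq_add_single_of_pos {N : ℕ} (p : Fin N → ℕ) (k : Fin N) (hk : 1 ≤ p k) :
    ∃ q : Fin N → ℕ, p = q + Pi.single k 1 ∧ ∑ l, p l = ∑ l, q l + 1 := by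
  have hle : Pi.single k 1 ≤ p := by
    intro i
    by_cases h : i = k
    · subst h; simpa using hk
    · simp [h]
  have hp : p = (p - Pi.single k 1) + Pi.single k 1 := (tsub_add_cancel_of_le hle).symm
  refine ⟨p - Pi.single k 1, hp, ?_⟩
  conv_lhs => rw [hp]
  simp only [Pi.add_apply, Finset.sum_add_distrib, Finset.sum_pi_single', Finset.mem_univ, if_true]

/-- For a family satisfying the level-1 recursion, if
`λ_j + μ_j^{(k)} = 0` for all `k`, then `a_p = 0` whenever `|p| ≥ 2` and `p_j ≥ 1`. -/
theorem stmt_4 {K : Type*} [Field K] [CharZero K] {N : ℕ} (hN : 1 ≤ N)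
    (lam : Fin N → K) (mu : Fin N → Fin N → K) (A : Fin N → K)
    (a : (Fin N → ℕ) → K)
    (h0 : a 0 = 1)
    (h1 : ∀ j : Fin N, a (Pi.single j 1) = A j)
    (hrec : ∀ (p : Fin N → ℕ) (j : Fin N), p ≠ 0 →
      a (p + Pi.single j 1) =
        (1 / ((p j : K) + 1)) * (lam j + ∑ l, mu j l * (p l : K)) * a p) :
    ∀ j : Fin N, (∀ k : Fin N, lam j + mu j k = 0) →
      ∀ p : Fin N → ℕ, 2 ≤ ∑ l, p l → 1 ≤ p j → a p = 0 := by
  intro j hj p hp hpj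
  have key : ∀ (n : ℕ) (s : Fin N → ℕ), ∑ l, s l = n + 1 → a (s + Pi.single j 1) = 0 := by
    intro n
    induction n with
    | zero =>
      intro s hs
      have hs0 : s ≠ 0 := by
        rintro rfl
        simp at hs
      have hmu : ∀ l, mu j l = -lam j := fun l => eq_neg_of_add_eq_zero_right (hj l)
      have hsK : ∑ l, (s l : K) = 1 := by exact_mod_cast hs
      rw [hrec s j hs0]
      simp [hmu, ← Finset.mul_sum, hsK]
    | succ n ih =>
      intro s hs
      obtain ⟨k, hk⟩ : ∃ k, 1 ≤ s k := by
        by_contra! h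
        have : ∑ l, s l = 0 := Finset.sum_eq_zero fun l _ => by have := h l; omega
        omega
      obtain ⟨t, rfl, ht⟩ := eq_add_single_of_pos s k hk
      have hne : t + Pi.single j 1 ≠ 0 := fun h => by
        have := congrFun h j
        simp at this
      rw [add_right_comm, hrec _ k hne, ih t (by omega), mul_zero]
  obtain ⟨q, rfl, hq⟩ := eq_add_single_of_pos p j hpj
  exact key (∑ l, q l - 1) q (by omega)
end

section
/- Suppose the family (a_p) satisfies the level-1 recursion with respect to λ, μ and A. Then at least one of the following two assertions holds. Case 1: there exist a nonzero scalar ν ∈ K, an integer M ≥ 0, a map c : {1,…,N} → {0,1,…,M} and scalars β_1,…,β_M ∈ K such that for every multi-index q with |q| ≥ 2: if q_l ≥ 1 for some l with c(l) = 0 then a_q = 0, and otherwise a_q = ν^{|q|−1}·(∏_{l=1}^N A_l^{q_l}/q_l!)·∏_{m=1}^M ∏_{t=1}^{s_m−1}(1 + t·β_m), where s_m = Σ_{l : c(l) = m} q_l. Case 2: there exist an integer M ≥ 0, a map c : {1,…,N} → {0,1,…,M} and scalars ν_1,…,ν_M ∈ K such that for every multi-index q with |q| ≥ 2: a_q = ν_m^{|q|−1}·(|q|−1)!·∏_{l=1}^N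 A_l^{q_l}/q_l! if the support of q is nonempty and contained in c^{−1}(m) for some m ∈ {1,…,M}, and a_q = 0 otherwise. (Empty products are equal to 1 and 0^0 = 1.) -/
/-!
Write `L_j(p) = λ_j + Σ_l μ_j^{(l)} p_l`, so that the recursion reads
`(p_j + 1) a_{p+ε_j} = L_j(p) a_p` for `p ≠ 0`. Computing `a_{p+ε_j+ε_k}` in two ways gives
`(μ_j^{(k)} L_k(p) − μ_k^{(j)} L_j(p)) a_p = 0` (`compat`). Call `j` active if some coefficient
`a_{ε_j+ε_k}` is nonzero; since a vanishing coefficient propagates upwards (`eq_zero_of_le`),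
every `a_q` with `|q| ≥ 2` whose support meets an inactive index is zero. Active indices have
`A_j ≠ 0`, and one normalises `ℓ_j = λ_j / A_j`, `m_{jk} = μ_j^{(k)} / A_j`.

The compatibility relations at `p = ε_i` and `p = 2ε_j` force (`core`) all `ℓ_j` with `j` active to
be one common scalar, and make `j = k ∨ m_{jk} ≠ 0` an equivalence relation on active indices with
`m_{jk} = m_{jj} = m_{kk}` for related `j, k`. Numbering the classes by `c` and calling `γ` the
value of `m` on each class, one has `L_j(p) = A_j (ℓ + γ_{c(j)} s_{c(j)}(p))` (`structure_lemma`).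
The recursion is then solved explicitly (`solve`): a common value `ℓ = ν ≠ 0` is the first
alternative with `β = γ/ν`; if `ℓ = 0` then mixed coefficients between different classes vanish and
the second alternative holds with `ν_m = γ_m`.
-/

open scoped Classical

/-! ### Consequences of compatibility at low degree -/

/-- The normalised compatibility relations determine the shape of the data on the set `S`:
`l` is constant, and `m` is the indicator of an equivalence relation, scaled on each class.
Here `l j + m j k` is the normalised value of the coefficient at `ε_j + ε_k`. -/
lemma core {K ι : Type*} [Field K] (S : ι → Prop) (l : ι → K) (m : ι → ι → K)
    (sym : ∀ j k, S j → S k → l k + m k j = l j + m j k)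
    (h3 : ∀ i j k, S i → S j → S k → m j k * (l k + m k i) = m k j * (l j + m j i))
    (h4 : ∀ j k, S j → S k → l j + m j j ≠ 0 →
      m j k * (l k + 2 * m k j) = m k j * (l j + 2 * m j j))
    (nd : ∀ j, S j → ∃ k, S k ∧ l j + m j k ≠ 0) :
    (∀ j k, S j → S k → l j = l k) ∧
    (∀ j k, S j → S k → m j k ≠ 0 → m j k = m j j ∧ m j k = m k k) ∧
    (∀ i j k, S i → S j → S k → m i j ≠ 0 → m j k ≠ 0 → m i k ≠ 0) := by
  have hne : ∀ j k, S j → S k → l j + m j k ≠ 0 →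
      l j = l k ∧ (m j k ≠ 0 → m j k = m j j ∧ m j k = m k k) := by
    intro j k hj hk hs
    have e0 := sym j k hj hk
    have e1 := h3 j j k hj hj hk
    have e2 := h3 k j k hk hj hk
    rw [e0] at e1
    by_cases hm : m j k = 0
    · have : m k j = 0 := by
        rw [hm, zero_mul] at e2
        exact (mul_eq_zero.mp e2.symm).resolve_right (by rwa [hm] at hs)
      refine ⟨?_, fun h => absurd hm h⟩
      rw [hm, this] at e0
      simpa using e0.symm
    · have hp : m j k * (l j + m j k) ≠ 0 := mul_ne_zero hm hs
      rw [e1] at hp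
      have hkj : m k j ≠ 0 := left_ne_zero_of_mul hp
      have hjj : l j + m j j ≠ 0 := right_ne_zero_of_mul hp
      have e4 := h4 j k hj hk hjj
      -- Subtracting the relations at `ε_j` and `2ε_j` isolates the linear parts.
      have e5 : m j k = m j j := by
        apply mul_left_cancel₀ hkj
        linear_combination e4 - e1 - m j k * e0
      have e6 : m j k = m k j := by
        apply mul_right_cancel₀ hs
        rw [e1, ← e5]
      have e7 : l j = l k := by linear_combination -e6 - e0
      refine ⟨e7, fun _ => ⟨e5, ?_⟩⟩
      apply mul_left_cancel₀ hm
      linear_combination -e2 + (l j + m j k) * e6 - m j k * e7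
  have hconst : ∀ j k, S j → S k → l j = l k := by
    intro j k hj hk
    by_cases hs : l j + m j k = 0
    · -- If the coefficient at `ε_j + ε_k` vanishes, compare `j` and `k` with a third index `i`.
      have e0 := sym j k hj hk
      have key : ∀ i, S i → l j * (l k + m k i) = l k * (l j + m j i) := by
        intro i hi
        have := h3 i j k hi hj hk
        linear_combination -this + (l k + m k i) * hs - (l j + m j i) * (e0 + hs)
      obtain ⟨i, hi, hji⟩ := nd j hj
      have hlj := (hne j i hj hi hji).1
      by_cases hz : l j = 0
      · have := key i hi
        rw [hz, zero_mul] at this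
        rw [hz] at hji
        rw [hz]
        exact ((mul_eq_zero.mp this.symm).resolve_right hji).symm
      · by_cases hzk : l k = 0
        · obtain ⟨i', hi', hki⟩ := nd k hk
          have := key i' hi'
          rw [hzk, zero_mul] at this
          rw [hzk] at hki
          rw [hzk]
          exact (mul_eq_zero.mp this).resolve_right hki
        · have h : l j * (l k + m k i) ≠ 0 := by
            rw [key i hi]; exact mul_ne_zero hzk hji
          have := (hne k i hk hi (right_ne_zero_of_mul h)).1
          rw [hlj, this]
    · exact (hne j k hj hk hs).1
  refine ⟨hconst, ?_, ?_⟩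
  · intro j k hj hk hm
    by_cases hs : l j + m j k = 0
    · have e0 := sym j k hj hk
      have ec := hconst j k hj hk
      have e1 := h3 j j k hj hj hk
      have e2 := h3 k j k hk hj hk
      have e : m j k = m k j := by linear_combination -e0 - ec
      constructor
      · apply mul_left_cancel₀ hm
        rw [← e] at e1
        linear_combination e1 + m j k * ec
      · apply mul_left_cancel₀ hm
        rw [← e] at e2
        linear_combination -e2 - m j k * ec
    · exact (hne j k hj hk hs).2 hm
  · intro i j k hi hj hk hij hjk hik
    have s1 : m i j = m j i := by linear_combination -sym i j hi hj - hconst i j hi hj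
    have s2 : m j k = m k j := by linear_combination -sym j k hj hk - hconst j k hj hk
    have s3 : m i k = m k i := by linear_combination -sym i k hi hk - hconst i k hi hk
    have e := h3 i j k hi hj hk
    rw [← s2] at e
    have e' := mul_left_cancel₀ hjk e
    apply hij
    linear_combination s1 - e' + hik - s3 - hconst j k hj hk

/-! ### Numbering the classes -/

/-- The grouping map attached to an equivalence relation on active indices: inactive indices get
the label `0`, the others a label in `{1, …, N}` identifying their class. -/
lemma exists_labels {K : Type*} [Field K] {N : ℕ} (S : Fin N → Prop) (m : Fin N → Fin N → K)
    (hsymm : ∀ j k, S j → S k → m j k = m k j)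
    (hdiag : ∀ j k, S j → S k → m j k ≠ 0 → m j k = m j j ∧ m j k = m k k)
    (htrans : ∀ i j k, S i → S j → S k → m i j ≠ 0 → m j k ≠ 0 → m i k ≠ 0) :
    ∃ (c : Fin N → ℕ) (γ : ℕ → K), (∀ j, c j ≤ N) ∧ (∀ j, c j = 0 ↔ ¬ S j) ∧
      ∀ j k, S j → S k → m j k = if c k = c j then γ (c j) else 0 := by
  let s : Setoid (Fin N) :=
    { r := fun j k => j = k ∨ (S j ∧ S k ∧ m j k ≠ 0)
      iseqv := by
        refine ⟨fun _ => Or.inl rfl, ?_, ?_⟩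
        · rintro x y (rfl | ⟨h1, h2, h3⟩)
          · exact Or.inl rfl
          · exact Or.inr ⟨h2, h1, by rwa [hsymm y x h2 h1]⟩
        · rintro x y z (rfl | ⟨h1, h2, h3⟩) h
          · exact h
          · rcases h with rfl | ⟨h4, h5, h6⟩
            · exact Or.inr ⟨h1, h2, h3⟩
            · exact Or.inr ⟨h1, h5, htrans x y z h1 h2 h5 h3 h6⟩ }
  let c : Fin N → ℕ := fun j => if S j then ((Quotient.mk s j).out : Fin N).val + 1 else 0
  have hc : ∀ j k, S j → S k → (c k = c j ↔ (j = k ∨ m j k ≠ 0)) := by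
    intro j k hj hk
    simp only [c, hj, hk, if_true, add_left_inj, Fin.val_inj, Quotient.out_inj]
    constructor
    · intro h
      rcases (Quotient.exact h.symm : j = k ∨ (S j ∧ S k ∧ m j k ≠ 0)) with h | h
      · exact Or.inl h
      · exact Or.inr h.2.2
    · intro h
      refine (Quotient.sound (s := s) (?_ : j = k ∨ (S j ∧ S k ∧ m j k ≠ 0))).symm
      exact h.imp id fun h => ⟨hj, hk, h⟩
  -- The value of `m` on a class is read off at any diagonal entry of the class.
  let γ : ℕ → K := fun n => if h : ∃ j, S j ∧ c j = n then m h.choose h.choose else 0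
  have hγ : ∀ j, S j → γ (c j) = m j j := by
    intro j hj
    have h : ∃ i, S i ∧ c i = c j := ⟨j, hj, rfl⟩
    have e : γ (c j) = m h.choose h.choose := dif_pos h
    rw [e]
    obtain ⟨h1, h2⟩ := h.choose_spec
    rcases (hc _ _ hj h1).1 h2 with h3 | h3
    · rw [← h3]
    · have := hdiag _ _ hj h1 h3
      rw [← this.1, ← this.2]
  refine ⟨c, γ, ?_, ?_, ?_⟩
  · intro j
    by_cases h : S j
    · simp only [c, h, if_true]
      exact Fin.is_lt _
    · simp [c, h]
  · intro j
    by_cases h : S j <;> simp [c, h]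
  · intro j k hj hk
    split_ifs with h
    · rw [hγ j hj]
      rcases (hc _ _ hj hk).1 h with rfl | h
      · rfl
      · exact (hdiag _ _ hj hk h).1
    · by_contra h'
      exact h ((hc _ _ hj hk).2 (Or.inr h'))

/-! ### Multi-indices, affine forms and weights -/

section MultiIndex

variable {K : Type*} [Field K] [CharZero K] {N : ℕ}

/-- The affine form `L_j(p) = λ_j + Σ_l μ_j^{(l)} p_l`. -/
def aff (lam : Fin N → K) (mu : Fin N → Fin N → K) (j : Fin N) (p : Fin N → ℕ) : K :=
  lam j + ∑ l, mu j l * (p l : K)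

/-- The weight `∏_l A_l^{q_l} / q_l!`. -/
def wt (A : Fin N → K) (q : Fin N → ℕ) : K := ∏ l, A l ^ (q l) / (Nat.factorial (q l) : K)

lemma aff_add (lam : Fin N → K) (mu : Fin N → Fin N → K) (j k : Fin N) (p : Fin N → ℕ) :
    aff lam mu j (p + Pi.single k 1) = aff lam mu j p + mu j k := by
  have : ∀ l, mu j l * (((p + Pi.single k 1 : Fin N → ℕ) l : ℕ) : K)
      = mu j l * (p l : K) + if l = k then mu j l else 0 := by
    intro l
    by_cases h : l = k
    · subst h; simp; ring
    · simp [h]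
  simp only [aff, this, Finset.sum_add_distrib, Finset.sum_ite_eq', Finset.mem_univ, if_true]
  ring

lemma aff_single (lam : Fin N → K) (mu : Fin N → Fin N → K) (j k : Fin N) :
    aff lam mu j (Pi.single k 1) = lam j + mu j k := by
  have := aff_add lam mu j k 0
  rw [zero_add] at this
  rw [this]; simp [aff]

lemma wt_single (A : Fin N → K) (j : Fin N) : wt A (Pi.single j 1) = A j := by
  unfold wt
  rw [Finset.prod_eq_single j]
  · simp
  · intro l _ h; simp [h]
  · simp

lemma wt_add (A : Fin N → K) (p : Fin N → ℕ) (j : Fin N) :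
    wt A (p + Pi.single j 1) = (1 / ((p j : K) + 1)) * A j * wt A p := by
  unfold wt
  rw [← Finset.mul_prod_erase _ _ (Finset.mem_univ j),
    ← Finset.mul_prod_erase Finset.univ (fun l => A l ^ (p l) / (Nat.factorial (p l) : K))
      (Finset.mem_univ j)]
  have : ∏ x ∈ Finset.univ.erase j,
      A x ^ ((p + Pi.single j 1 : Fin N → ℕ) x) /
        (Nat.factorial ((p + Pi.single j 1 : Fin N → ℕ) x) : K)
      = ∏ x ∈ Finset.univ.erase j, A x ^ (p x) / (Nat.factorial (p x) : K) := by
    refine Finset.prod_congr rfl fun x hx => ?_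
    simp [Finset.ne_of_mem_erase hx]
  rw [this]
  have h1 : (Nat.factorial (p j) : K) ≠ 0 := by exact_mod_cast Nat.factorial_ne_zero _
  have h2 : (p j : K) + 1 ≠ 0 := Nat.cast_add_one_ne_zero _
  simp only [Pi.add_apply, Pi.single_eq_same, Nat.factorial_succ, pow_succ]
  push_cast
  field_simp

/-- A multi-index with a nonzero entry at `j` is `ε_j` plus a multi-index. -/
lemma exists_eq_add_single (q : Fin N → ℕ) (j : Fin N) (h : q j ≠ 0) :
    ∃ p : Fin N → ℕ, q = p + Pi.single j 1 := by
  refine ⟨q - Pi.single j 1, ?_⟩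
  funext l
  by_cases hl : l = j
  · subst hl; simp; omega
  · simp [hl]

lemma sum_add_single (p : Fin N → ℕ) (j : Fin N) (s : Finset (Fin N)) :
    ∑ l ∈ s, (p + Pi.single j 1 : Fin N → ℕ) l = ∑ l ∈ s, p l + if j ∈ s then 1 else 0 := by
  simp only [Pi.add_apply, Finset.sum_add_distrib]
  congr 1
  simp [Pi.single_apply]

lemma sum_ne_zero (p : Fin N → ℕ) (h : p ≠ 0) : ∑ l, p l ≠ 0 := by
  intro h'
  apply h
  funext l
  exact Finset.sum_eq_zero_iff.1 h' l (Finset.mem_univ l)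

/-- Induction over the nonzero multi-indices supported in `T`. -/
lemma multi_induction (T : Fin N → Prop) (P : (Fin N → ℕ) → Prop)
    (hs : ∀ j, T j → P (Pi.single j 1))
    (hstep : ∀ p j, p ≠ 0 → (∀ l, p l ≠ 0 → T l) → T j → P p → P (p + Pi.single j 1)) :
    ∀ q, q ≠ 0 → (∀ l, q l ≠ 0 → T l) → P q := by
  intro q
  induction hn : ∑ l, q l generalizing q with
  | zero =>
    intro hq
    exact absurd hn (sum_ne_zero q hq)
  | succ n ih =>
    intro hq hT
    obtain ⟨j, hj⟩ := Function.ne_iff.1 hq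
    obtain ⟨p, rfl⟩ := exists_eq_add_single q j hj
    rw [sum_add_single] at hn
    simp only [Finset.mem_univ, if_true, add_left_inj] at hn
    have hpT : ∀ l, p l ≠ 0 → T l := fun l hl => hT l (by simp [hl])
    by_cases hp : p = 0
    · subst hp
      rw [zero_add]
      exact hs j (hT j hj)
    · exact hstep p j hp hpT (hT j hj) (ih p hn hp hpT)

/-! ### The recursion -/

variable (lam : Fin N → K) (mu : Fin N → Fin N → K) (A : Fin N → K) (a : (Fin N → ℕ) → K)

/-- The recursion at nonzero multi-indices together with the prescribed values at the `ε_j`. -/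
structure Rec : Prop where
  single : ∀ j : Fin N, a (Pi.single j 1) = A j
  step : ∀ (p : Fin N → ℕ) (j : Fin N), p ≠ 0 →
    a (p + Pi.single j 1) = (1 / ((p j : K) + 1)) * aff lam mu j p * a p

variable {lam mu A a}

lemma add_single_ne_zero (p : Fin N → ℕ) (j : Fin N) : p + Pi.single j 1 ≠ 0 := by
  intro h
  have := congrFun h j
  simp at this

lemma single_ne_zero (j : Fin N) : (Pi.single j 1 : Fin N → ℕ) ≠ 0 := by
  intro h
  have := congrFun h j
  simp at this

/-- The condition for the two ways of computing `a_{p+ε_j+ε_k}` from `a_p ≠ 0` to agree. -/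
lemma compat (h : Rec lam mu A a) (p : Fin N → ℕ) (hp : p ≠ 0) (hap : a p ≠ 0) (j k : Fin N) :
    mu j k * aff lam mu k p = mu k j * aff lam mu j p := by
  by_cases hjk : j = k
  · subst hjk; rfl
  have e1 := h.step (p + Pi.single k 1) j (add_single_ne_zero _ _)
  have e2 := h.step (p + Pi.single j 1) k (add_single_ne_zero _ _)
  rw [add_right_comm] at e2
  rw [e2, h.step p j hp, h.step p k hp, aff_add, aff_add] at e1
  have hkj : k ≠ j := fun h => hjk h.symm
  simp only [Pi.add_apply, Pi.single_apply, hjk, hkj, if_false, add_zero] at e1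
  have h1 : (p j : K) + 1 ≠ 0 := Nat.cast_add_one_ne_zero _
  have h2 : (p k : K) + 1 ≠ 0 := Nat.cast_add_one_ne_zero _
  field_simp at e1
  linear_combination -e1

/-- The case `p = 0` of compatibility, where the prescribed values `A_j` replace the recursion. -/
lemma compat_two (h : Rec lam mu A a) (j k : Fin N) :
    (lam k + mu k j) * A j = (lam j + mu j k) * A k := by
  by_cases hjk : j = k
  · subst hjk; rfl
  have hkj : k ≠ j := fun h => hjk h.symm
  have e1 := h.step (Pi.single j 1) k (single_ne_zero _)
  have e2 := h.step (Pi.single k 1) j (single_ne_zero _)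
  rw [add_comm, e2, aff_single, aff_single, h.single, h.single] at e1
  simpa [hjk, hkj] using e1.symm

/-- A vanishing coefficient at a nonzero multi-index propagates to all larger multi-indices. -/
lemma eq_zero_of_le (h : Rec lam mu A a) (p : Fin N → ℕ) (hp : p ≠ 0) (hap : a p = 0)
    (r : Fin N → ℕ) : a (p + r) = 0 := by
  by_cases hr : r = 0
  · rw [hr, add_zero, hap]
  · refine multi_induction (fun _ => True) (fun r => a (p + r) = 0) ?_ ?_ r hr (fun _ _ => trivial)
    · intro j _
      rw [h.step p j hp, hap, mul_zero]
    · intro r j hr _ _ hz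
      have : p + r ≠ 0 := by
        intro h'
        apply hr
        funext l
        have := congrFun h' l
        simp at this
        exact this.2
      rw [← add_assoc, h.step _ j this, hz, mul_zero]

/-- An explicit solution of the normalised recursion on the multi-indices supported in `T`
computes the family `a`. -/
lemma solve (h : Rec lam mu A a) (T : Fin N → Prop) (G : (Fin N → ℕ) → K)
    (hG1 : ∀ j, T j → G (Pi.single j 1) = 1)
    (hG2 : ∀ p j, p ≠ 0 → (∀ l, p l ≠ 0 → T l) → T j →
      aff lam mu j p * G p = A j * G (p + Pi.single j 1)) :
    ∀ q, q ≠ 0 → (∀ l, q l ≠ 0 → T l) → a q = wt A q * G q := by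
  apply multi_induction
  · intro j hj
    rw [h.single, wt_single, hG1 j hj, mul_one]
  · intro p j hp hpT hj hP
    rw [h.step p j hp, hP, wt_add]
    linear_combination (1 / ((p j : K) + 1)) * wt A p * hG2 p j hp hpT hj

/-- A nonzero second coefficient `a_{ε_j+ε_k}` makes the normalisation by `A_j` legitimate. -/
lemma active (h : Rec lam mu A a) (j k : Fin N)
    (hjk : a (Pi.single j 1 + Pi.single k 1) ≠ 0) : A j ≠ 0 ∧ lam k + mu k j ≠ 0 := by
  rw [h.step _ _ (single_ne_zero _), h.single, aff_single] at hjk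
  exact ⟨right_ne_zero_of_mul hjk, right_ne_zero_of_mul (left_ne_zero_of_mul hjk)⟩

/-- The active indices fall into classes on which the affine forms `L_j` depend, up to the factor
`A_j`, only on the total degree of the multi-index in the class of `j`. -/
lemma structure_lemma (h : Rec lam mu A a) :
    ∃ (c : Fin N → ℕ) (γ : ℕ → K) (ν : K), (∀ j, c j ≤ N) ∧
      (∀ j k, c j = 0 → a (Pi.single j 1 + Pi.single k 1) = 0) ∧
      ∀ j, c j ≠ 0 → ∀ p : Fin N → ℕ, (∀ l, p l ≠ 0 → c l ≠ 0) →
        aff lam mu j p =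
          A j * (ν + γ (c j) * ((∑ l ∈ Finset.univ.filter (fun l => c l = c j), p l : ℕ) : K)) := by
  let S : Fin N → Prop := fun j => ∃ k, a (Pi.single j 1 + Pi.single k 1) ≠ 0
  have hA : ∀ j, S j → A j ≠ 0 := fun j ⟨k, hk⟩ => (active h j k hk).1
  let l : Fin N → K := fun j => lam j / A j
  let m : Fin N → Fin N → K := fun j k => mu j k / A j
  have hl : ∀ j, S j → lam j = A j * l j := fun j hj => (mul_div_cancel₀ _ (hA j hj)).symm
  have hm : ∀ j k, S j → mu j k = A j * m j k := fun j k hj =>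
    (mul_div_cancel₀ _ (hA j hj)).symm
  have sym : ∀ j k, S j → S k → l k + m k j = l j + m j k := by
    intro j k hj hk
    have e := compat_two h j k
    rw [hl j hj, hl k hk, hm j k hj, hm k j hk] at e
    apply mul_left_cancel₀ (mul_ne_zero (hA j hj) (hA k hk))
    linear_combination e
  obtain ⟨hc, hd, ht⟩ := core S l m sym
    (by
      intro i j k hi hj hk
      have e := compat h (Pi.single i 1) (single_ne_zero i) (by rw [h.single]; exact hA i hi) j k
      rw [aff_single, aff_single, hl j hj, hl k hk, hm j k hj, hm k j hk, hm j i hj, hm k i hk] at e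
      apply mul_left_cancel₀ (mul_ne_zero (hA j hj) (hA k hk))
      linear_combination e)
    (by
      intro j k hj hk hs
      have e := compat h (Pi.single j 1 + Pi.single j 1) (add_single_ne_zero _ _) (by
        rw [h.step _ _ (single_ne_zero j), h.single, aff_single, hl j hj, hm j j hj, ← mul_add]
        refine mul_ne_zero (mul_ne_zero ?_ (mul_ne_zero (hA j hj) hs)) (hA j hj)
        norm_num) j k
      rw [aff_add, aff_add, aff_single, aff_single, hl j hj, hl k hk, hm j k hj, hm k j hk,
        hm j j hj] at e
      apply mul_left_cancel₀ (mul_ne_zero (hA j hj) (hA k hk))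
      linear_combination e)
    (by
      rintro j ⟨k, hk⟩
      have hj : S j := ⟨k, hk⟩
      refine ⟨k, ⟨j, by rwa [add_comm]⟩, ?_⟩
      rw [add_comm] at hk
      have := (active h k j hk).2
      rw [hl j hj, hm j k hj, ← mul_add] at this
      exact right_ne_zero_of_mul this)
  obtain ⟨c, γ, hcN, hc0, hcm⟩ := exists_labels S m
    (fun j k hj hk => by linear_combination -sym j k hj hk - hc j k hj hk) hd ht
  obtain ⟨ν, hν⟩ : ∃ ν, ∀ j, S j → l j = ν := by
    by_cases hS : ∃ j, S j
    · obtain ⟨i, hi⟩ := hS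
      exact ⟨l i, fun j hj => hc j i hj hi⟩
    · exact ⟨0, fun j hj => absurd ⟨j, hj⟩ hS⟩
  refine ⟨c, γ, ν, hcN, ?_, ?_⟩
  · intro j k hj
    by_contra h'
    exact (hc0 j).1 hj ⟨k, h'⟩
  · intro j hj p hp
    have hS : ∀ j, c j ≠ 0 → S j := fun j hj => by
      by_contra h'
      exact hj ((hc0 j).2 h')
    have hjS := hS j hj
    unfold aff
    rw [hl j hjS, hν j hjS, mul_add, Finset.sum_filter]
    congr 1
    push_cast
    rw [Finset.mul_sum, Finset.mul_sum]
    refine Finset.sum_congr rfl fun k _ => ?_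
    by_cases hk : p k = 0
    · simp [hk]
    · rw [hm j k hjS, hcm j k hjS (hS k (hp k hk))]
      split_ifs <;> ring

/-- The coefficients vanish above degree one as soon as the support meets an inactive index. -/
lemma eq_zero_of_inactive (h : Rec lam mu A a) (j : Fin N)
    (hj : ∀ k, a (Pi.single j 1 + Pi.single k 1) = 0) (q : Fin N → ℕ) (hqj : q j ≠ 0)
    (hq : 2 ≤ ∑ l, q l) : a q = 0 := by
  obtain ⟨p, rfl⟩ := exists_eq_add_single q j hqj
  have hp : p ≠ 0 := by
    rintro rfl
    rw [sum_add_single] at hq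
    simp at hq
  obtain ⟨k, hk⟩ := Function.ne_iff.1 hp
  obtain ⟨r, rfl⟩ := exists_eq_add_single p k hk
  have := eq_zero_of_le h _ (add_single_ne_zero (Pi.single j 1) k) (hj k) r
  rw [← this]
  congr 1
  abel

/-- Two indices at which the mixed second coefficient vanishes cannot both occur in the support. -/
lemma eq_zero_of_pair (h : Rec lam mu A a) (j k : Fin N) (hjk : j ≠ k)
    (hz : a (Pi.single j 1 + Pi.single k 1) = 0) (q : Fin N → ℕ) (hqj : q j ≠ 0)
    (hqk : q k ≠ 0) : a q = 0 := by
  obtain ⟨p, rfl⟩ := exists_eq_add_single q j hqj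
  have hk : p k ≠ 0 := by
    have hkj : k ≠ j := fun h => hjk h.symm
    simpa [hkj] using hqk
  obtain ⟨r, rfl⟩ := exists_eq_add_single p k hk
  have := eq_zero_of_le h _ (add_single_ne_zero (Pi.single j 1) k) hz r
  rw [← this]
  congr 1
  abel

end MultiIndex

/-! ### The dichotomy -/

lemma prod_Ico_one {K : Type*} [Field K] (β : K) (s : ℕ) :
    ∏ t ∈ Finset.Ico 1 s, (1 + (t : K) * β) = ∏ t ∈ Finset.range s, (1 + (t : K) * β) := by
  rcases s with _ | s
  · simp
  · rw [Finset.range_eq_Ico, Finset.prod_eq_prod_Ico_succ_bot (Nat.succ_pos s)]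
    simp

/-- Dichotomy for families satisfying the level-1 recursion:
the generating series is either `(1/ν)·∏_m f_{β_m}(ν·Σ_{l∈I_m} A_l h_l) + Σ_{l∈J} A_l h_l + 1 − 1/ν`
or `1 − Σ_m (1/ν_m)·ln(1 − ν_m·Σ_{l∈I_m} A_l h_l) + Σ_{l∈J} A_l h_l`, in coefficientwise form. -/
theorem stmt_5 {K : Type*} [Field K] [CharZero K] {N : ℕ} (hN : 1 ≤ N)
    (lam : Fin N → K) (mu : Fin N → Fin N → K) (A : Fin N → K)
    (a : (Fin N → ℕ) → K)
    (h0 : a 0 = 1)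
    (h1 : ∀ j : Fin N, a (Pi.single j 1) = A j)
    (hrec : ∀ (p : Fin N → ℕ) (j : Fin N), p ≠ 0 →
      a (p + Pi.single j 1) =
        (1 / ((p j : K) + 1)) * (lam j + ∑ l, mu j l * (p l : K)) * a p) :
    (∃ (ν : K), ν ≠ 0 ∧ ∃ (M : ℕ) (c : Fin N → ℕ) (β : ℕ → K),
      (∀ j : Fin N, c j ≤ M) ∧
      ∀ q : Fin N → ℕ, 2 ≤ ∑ l, q l →
        ((∃ l : Fin N, 1 ≤ q l ∧ c l = 0) → a q = 0) ∧
        ((¬ ∃ l : Fin N, 1 ≤ q l ∧ c l = 0) →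
          a q = ν ^ ((∑ l, q l) - 1) *
            (∏ l, A l ^ (q l) / (Nat.factorial (q l) : K)) *
            ∏ m ∈ Finset.Icc 1 M,
              ∏ t ∈ Finset.Ico 1 (∑ l ∈ Finset.univ.filter (fun l => c l = m), q l),
                (1 + (t : K) * β m)))
    ∨
    (∃ (M : ℕ) (c : Fin N → ℕ) (ν : ℕ → K),
      (∀ j : Fin N, c j ≤ M) ∧
      ∀ q : Fin N → ℕ, 2 ≤ ∑ l, q l →
        (∀ m : ℕ, 1 ≤ m → m ≤ M → (∃ l : Fin N, q l ≠ 0) →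
          (∀ l : Fin N, q l ≠ 0 → c l = m) →
          a q = ν m ^ ((∑ l, q l) - 1) * (Nat.factorial ((∑ l, q l) - 1) : K) *
            ∏ l, A l ^ (q l) / (Nat.factorial (q l) : K)) ∧
        ((¬ ∃ m : ℕ, 1 ≤ m ∧ m ≤ M ∧ (∃ l : Fin N, q l ≠ 0) ∧
            (∀ l : Fin N, q l ≠ 0 → c l = m)) → a q = 0)) := by
  have h : Rec lam mu A a := ⟨h1, hrec⟩
  obtain ⟨c, γ, ν, hcN, hc0, hL⟩ := structure_lemma h
  have hqne : ∀ q : Fin N → ℕ, 2 ≤ ∑ l, q l → q ≠ 0 := by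
    rintro q hq rfl
    simp at hq
  by_cases hν : ν = 0
  · right
    refine ⟨N, c, γ, hcN, fun q hq => ⟨?_, ?_⟩⟩
    · intro m hm _ _ hsupp
      have := solve h (fun l => c l = m)
        (fun q => γ m ^ ((∑ l, q l) - 1) * (Nat.factorial ((∑ l, q l) - 1) : K))
        (by intro j _; simp)
        (by
          rintro p j hp hpT rfl
          have hsum : ∑ l ∈ Finset.univ.filter (fun l => c l = c j), p l = ∑ l, p l := by
            rw [Finset.sum_filter]
            refine Finset.sum_congr rfl fun l _ => ?_
            split_ifs with hl
            · rfl
            · by_contra h'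
              exact hl (hpT l fun h => h' h.symm)
          rw [hL j (by omega) p (fun l hl => by rw [hpT l hl]; omega), hsum, hν]
          simp only [sum_add_single, Finset.mem_univ, if_true]
          obtain ⟨n, hn⟩ := Nat.exists_eq_succ_of_ne_zero (sum_ne_zero p hp)
          rw [hn]
          simp only [Nat.succ_eq_add_one, Nat.add_sub_cancel, Nat.factorial_succ, pow_succ]
          push_cast
          ring)
        q (hqne q hq) hsupp
      rw [this, wt]
      ring
    · intro hno
      by_cases hz : ∃ l, q l ≠ 0 ∧ c l = 0
      · obtain ⟨l, hl, hcl⟩ := hz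
        exact eq_zero_of_inactive h l (fun k => hc0 l k hcl) q hl hq
      · push Not at hz
        obtain ⟨j, hj⟩ := Function.ne_iff.1 (hqne q hq)
        have hj' : q j ≠ 0 := hj
        -- The support of `q` is not contained in the class of `j`.
        have : ∃ k, q k ≠ 0 ∧ c k ≠ c j := by
          by_contra h'
          push Not at h'
          exact hno ⟨c j, Nat.one_le_iff_ne_zero.2 (hz j hj'), hcN j, ⟨j, hj'⟩, h'⟩
        obtain ⟨k, hk, hkj⟩ := this
        refine eq_zero_of_pair h j k (fun e => hkj (by rw [e])) ?_ q hj' hk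
        rw [h.step _ _ (single_ne_zero j), hL k (hz k hk) _ (fun l hl => ?_), hν]
        · have : ∑ l ∈ Finset.univ.filter (fun l => c l = c k), (Pi.single j 1 : Fin N → ℕ) l
              = 0 := by
            refine Finset.sum_eq_zero fun l hl => ?_
            have hlj : l ≠ j := by
              rintro rfl
              exact hkj (Finset.mem_filter.1 hl).2.symm
            simp [hlj]
          rw [this]
          simp
        · have : l = j := by
            by_contra h'
            simp [h'] at hl
          rw [this]
          exact hz j hj'
  · left
    refine ⟨ν, hν, N, c, fun m => γ m / ν, hcN, fun q hq => ⟨?_, ?_⟩⟩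
    · rintro ⟨l, hl, hcl⟩
      exact eq_zero_of_inactive h l (fun k => hc0 l k hcl) q (by omega) hq
    · intro hno
      have hsupp : ∀ l, q l ≠ 0 → c l ≠ 0 := fun l hl hcl =>
        hno ⟨l, Nat.one_le_iff_ne_zero.2 hl, hcl⟩
      have := solve h (fun l => c l ≠ 0)
        (fun q => ν ^ ((∑ l, q l) - 1) * ∏ m ∈ Finset.Icc 1 N,
          ∏ t ∈ Finset.range (∑ l ∈ Finset.univ.filter (fun l => c l = m), q l),
            (1 + (t : K) * (γ m / ν)))
        (by
          intro j _
          have : ∀ m, ∏ t ∈ Finset.range (∑ l ∈ Finset.univ.filter (fun l => c l = m),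
              (Pi.single j 1 : Fin N → ℕ) l), (1 + (t : K) * (γ m / ν)) = 1 := by
            intro m
            have := sum_add_single 0 j (Finset.univ.filter (fun l => c l = m))
            rw [zero_add] at this
            rw [this]
            split_ifs <;> simp
          simp only [this]
          simp)
        (by
          intro p j hp hpT hj
          rw [hL j hj p hpT]
          obtain ⟨n, hn⟩ := Nat.exists_eq_succ_of_ne_zero (sum_ne_zero p hp)
          simp only [sum_add_single, hn, Finset.mem_univ, if_true, Nat.succ_eq_add_one,
            Nat.add_sub_cancel, pow_succ]
          have hmem : c j ∈ Finset.Icc 1 N :=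
            Finset.mem_Icc.2 ⟨Nat.one_le_iff_ne_zero.2 hj, hcN j⟩
          -- Only the factor of the class of `j` changes.
          rw [← Finset.mul_prod_erase _ _ hmem, ← Finset.mul_prod_erase _ _ hmem]
          have hrest : ∀ m ∈ (Finset.Icc 1 N).erase (c j),
              ∏ t ∈ Finset.range (∑ l ∈ Finset.univ.filter (fun l => c l = m), p l +
                if j ∈ Finset.univ.filter (fun l => c l = m) then 1 else 0),
                (1 + (t : K) * (γ m / ν)) =
              ∏ t ∈ Finset.range (∑ l ∈ Finset.univ.filter (fun l => c l = m), p l),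
                (1 + (t : K) * (γ m / ν)) := by
            intro m hm
            have : j ∉ Finset.univ.filter (fun l => c l = m) := by
              intro h'
              exact Finset.ne_of_mem_erase hm (Finset.mem_filter.1 h').2.symm
            rw [if_neg this, add_zero]
          have hself : j ∈ Finset.univ.filter (fun l => c l = c j) := by simp
          rw [Finset.prod_congr rfl hrest, if_pos hself, Finset.prod_range_succ]
          field_simp)
        q (hqne q hq) hsupp
      rw [this, wt]
      simp only [prod_Ico_one]
      ring
end

section
/- Let r be an oriented graph on a set I satisfying the common-ascendant condition. Then for every n ≥ 1 and all vertices i, j, k: if there is an oriented path of length n from i to j and an oriented path of length n from i to k, then j and k have the same direct descendants, i.e. for every vertex l, r j l holds if and only if r k l. -/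
/-- There is an oriented path of length `n` from `i` to `j` in the oriented graph
given by the relation `r`. -/
def HasPath {I : Type*} (r : I → I → Prop) : ℕ → I → I → Prop
  | 0, i, j => i = j
  | n + 1, i, j => ∃ k, r i k ∧ HasPath r n k j

/-- In an oriented graph satisfying the common-ascendant condition,
two endpoints of oriented paths of the same length `n ≥ 1` from a common vertex
have the same direct descendants. -/
theorem stmt_6 {I : Type*} (r : I → I → Prop)
    (hca : ∀ i j k : I, r i j → r i k → ∀ l, (r j l ↔ r k l)) :
    ∀ n : ℕ, 1 ≤ n → ∀ i j k : I, HasPath r n i j → HasPath r n i k →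
      ∀ l : I, (r j l ↔ r k l) := by
  intro n hn
  induction n, hn using Nat.le_induction with
  | base =>
    rintro i j k ⟨_, hj, rfl⟩ ⟨_, hk, rfl⟩
    exact hca _ _ _ hj hk
  | succ n hn ih =>
    rintro i j k ⟨a, hia, haj⟩ ⟨b, hib, hbk⟩
    -- Since `a` and `b` have the same direct descendants and `n ≥ 1`, replacing the initial
    -- vertex `a` by `b` turns the path from `a` to `j` into one from `b` to `j`.
    have hbj : HasPath r n b j := by
      obtain ⟨m, rfl⟩ := Nat.exists_eq_add_of_le' hn
      obtain ⟨c, hac, hcj⟩ := haj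
      exact ⟨c, (hca _ _ _ hia hib c).1 hac, hcj⟩
    exact ih b j k hbj hbk
end

section
/- Let r be an oriented graph on a set I satisfying the common-ascendant condition. Then for all integers m, n ≥ 1 and all vertices i, j, k: if there is an oriented path of length m from i to j, then there is an oriented path of length m + n from i to k if and only if there is an oriented path of length n from j to k. -/
/-- Under the common-ascendant condition, siblings reach the same vertices by paths of
any given positive length, since they have the same first steps available. -/
theorem hasPath_sibling {I : Type*} {r : I → I → Prop}
    (hca : ∀ i j k : I, r i j → r i k → ∀ l, (r j l ↔ r k l))
    {n : ℕ} (hn : 1 ≤ n) {i p q k : I} (hp : r i p) (hq : r i q)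
    (h : HasPath r n p k) : HasPath r n q k := by
  obtain ⟨n, rfl⟩ := Nat.exists_eq_add_of_le' hn
  obtain ⟨l, hl, h⟩ := h
  exact ⟨l, (hca i p q hp hq l).1 hl, h⟩

/-- In an oriented graph satisfying the common-ascendant condition,
if there is an oriented path of length `m` from `i` to `j`, then there is an
oriented path of length `m + n` from `i` to `k` iff there is one of length `n`
from `j` to `k`. -/
theorem stmt_7 {I : Type*} (r : I → I → Prop)
    (hca : ∀ i j k : I, r i j → r i k → ∀ l, (r j l ↔ r k l)) :
    ∀ m n : ℕ, 1 ≤ m → 1 ≤ n → ∀ i j k : I, HasPath r m i j →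
      (HasPath r (m + n) i k ↔ HasPath r n j k) := by
  intro m n hm hn
  -- The claim also holds for `m = 0`, so the induction can start there.
  clear hm
  induction m with
  | zero =>
    rintro i j k rfl
    rw [Nat.zero_add]
  | succ m ih =>
    rintro i j k ⟨p, hp, hpj⟩
    rw [← ih p j k hpj, Nat.succ_add_eq_add_succ, Nat.add_succ]
    exact ⟨fun ⟨q, hq, h⟩ => hasPath_sibling hca (by omega) hq hp h, fun h => ⟨p, hp, h⟩⟩
end

section
/- Let K be a field of characteristic zero and let r be an oriented graph on a set I satisfying the common-ascendant condition. Then on the K-vector space of finitely supported K-valued functions on I × {n ∈ ℕ : n ≥ 1}, with basis written P_i(n) for i ∈ I and n ≥ 1, there exists a K-bilinear associative (non-unital) multiplication such that for all i, j ∈ I and all m, n ≥ 1: P_j(n)·P_i(m) = P_i(m+n) if there is an oriented path of length m from i to j, and P_j(n)·P_i(m) = 0 otherwise. -/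
theorem HasPath.trans {I : Type*} {r : I → I → Prop} {m n : ℕ} {i j k : I}
    (h : HasPath r m i j) (h' : HasPath r n j k) : HasPath r (m + n) i k := by
  induction m generalizing i with
  | zero =>
    cases h
    simpa using h'
  | succ m ih =>
    obtain ⟨a, ha, haj⟩ := h
    rw [Nat.add_right_comm]
    exact ⟨a, ha, ih haj⟩

/-- Under the common-ascendant condition, if `j` is reached from `i` in `m + 1` steps, then every
vertex reached from `i` in `(n + 1) + (m + 1)` steps is reached from `j` in `n + 1` steps. Both
lengths must be positive: distinct out-neighbours share their descendants, but are not equal. -/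
theorem HasPath.of_add {I : Type*} {r : I → I → Prop}
    (hca : ∀ i j k : I, r i j → r i k → ∀ l, (r j l ↔ r k l)) {m n : ℕ} {i j k : I}
    (h : HasPath r (m + 1) i j) (h' : HasPath r (n + 1 + m + 1) i k) :
    HasPath r (n + 1) j k := by
  induction m generalizing i with
  | zero =>
    obtain ⟨a, ha, rfl⟩ := h
    obtain ⟨b, hb, c, hbc, hck⟩ := h'
    exact ⟨c, (hca i b a hb ha c).1 hbc, hck⟩
  | succ m ih =>
    obtain ⟨b, hb, c, hbc, hck⟩ := h'
    obtain ⟨a, ha, haj⟩ := h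
    -- Replace the first vertex `b` of the long path by the first vertex `a` of the short one.
    exact ih haj ⟨c, (hca i b a hb ha c).1 hbc, hck⟩

theorem hasPath_add_iff {I : Type*} {r : I → I → Prop}
    (hca : ∀ i j k : I, r i j → r i k → ∀ l, (r j l ↔ r k l)) {m n : ℕ+} {i j k : I}
    (h : HasPath r m i j) : HasPath r (m + n : ℕ+) i k ↔ HasPath r n j k := by
  obtain ⟨m', hm⟩ := Nat.exists_eq_succ_of_ne_zero m.ne_zero
  obtain ⟨n', hn⟩ := Nat.exists_eq_succ_of_ne_zero n.ne_zero
  rw [PNat.add_coe]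
  refine ⟨fun h' => ?_, h.trans⟩
  rw [hm] at h h'
  rw [hn] at h' ⊢
  rw [Nat.add_comm] at h'
  exact HasPath.of_add hca h h'

open Classical in
/-- The product of two basis vectors: for `a = (j, n)` and `b = (i, m)` it is
`P_j(n) · P_i(m)`, where the path condition concerns the right factor's vertex and length. -/
noncomputable def basisMul (K : Type*) [Field K] {I : Type*} (r : I → I → Prop)
    (a b : I × ℕ+) : (I × ℕ+) →₀ K :=
  if HasPath r b.2 b.1 a.1 then Finsupp.single (b.1, b.2 + a.2) 1 else 0

/-- The bilinear extension of `basisMul`. -/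
noncomputable def pathMul (K : Type*) [Field K] {I : Type*} (r : I → I → Prop) :
    ((I × ℕ+) →₀ K) →ₗ[K] ((I × ℕ+) →₀ K) →ₗ[K] ((I × ℕ+) →₀ K) :=
  Finsupp.linearCombination K fun a => Finsupp.linearCombination K (basisMul K r a)

theorem pathMul_single {K : Type*} [Field K] {I : Type*} (r : I → I → Prop)
    (a b : I × ℕ+) (s t : K) :
    pathMul K r (Finsupp.single a s) (Finsupp.single b t) = (s * t) • basisMul K r a b := by
  simp [pathMul, mul_smul]

theorem pathMul_assoc_basis {K : Type*} [Field K] {I : Type*} {r : I → I → Prop}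
    (hca : ∀ i j k : I, r i j → r i k → ∀ l, (r j l ↔ r k l)) (a b c : I × ℕ+) :
    pathMul K r (basisMul K r a b) (Finsupp.single c 1) =
      pathMul K r (Finsupp.single a 1) (basisMul K r b c) := by
  obtain ⟨k, p⟩ := a
  obtain ⟨j, n⟩ := b
  obtain ⟨i, m⟩ := c
  by_cases h : HasPath r m i j
  · have key := hasPath_add_iff hca (n := n) (k := k) h
    by_cases h' : HasPath r n j k
    · have h'' := key.2 h'
      simp only [basisMul, if_pos h, if_pos h', pathMul_single, if_pos h'', add_assoc]
    · have h'' := mt key.1 h'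
      simp only [basisMul, if_pos h, if_neg h', pathMul_single, if_neg h'', map_zero,
        LinearMap.zero_apply, smul_zero]
  · by_cases h' : HasPath r n j k
    · simp only [basisMul, if_neg h, if_pos h', pathMul_single, map_zero, smul_zero]
    · simp only [basisMul, if_neg h, if_neg h', map_zero, LinearMap.zero_apply]

theorem pathMul_assoc {K : Type*} [Field K] {I : Type*} {r : I → I → Prop}
    (hca : ∀ i j k : I, r i j → r i k → ∀ l, (r j l ↔ r k l)) (x y z : (I × ℕ+) →₀ K) :
    pathMul K r (pathMul K r x y) z = pathMul K r x (pathMul K r y z) := by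
  induction x using Finsupp.induction_linear with
  | zero => simp
  | add x x' hx hx' => simp [hx, hx']
  | single a s =>
    induction y using Finsupp.induction_linear with
    | zero => simp
    | add y y' hy hy' => simp [hy, hy']
    | single b t =>
      induction z using Finsupp.induction_linear with
      | zero => simp
      | add z z' hz hz' => simp [hz, hz']
      | single c u =>
        have h := pathMul_assoc_basis (K := K) hca a b c
        have hc : Finsupp.single c u = u • Finsupp.single c (1 : K) := by simp
        have ha : Finsupp.single a s = s • Finsupp.single a (1 : K) := by simp
        rw [pathMul_single, pathMul_single, hc, ha]
        simp only [map_smul, LinearMap.smul_apply, h, smul_smul]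
        congr 1
        ring

/-- The path algebra `A_G` of an oriented graph satisfying the
common-ascendant condition: on the space with basis `P_i(n)` (`i ∈ I`, `n ≥ 1`)
there is a bilinear associative product with
`P_j(n)·P_i(m) = P_i(m+n)` if there is an oriented path of length `m` from `i`
to `j`, and `P_j(n)·P_i(m) = 0` otherwise. -/
theorem stmt_8 {K : Type*} [Field K] [CharZero K] {I : Type*} (r : I → I → Prop)
    (hca : ∀ i j k : I, r i j → r i k → ∀ l, (r j l ↔ r k l)) :
    ∃ mul : ((I × ℕ+) →₀ K) →ₗ[K] ((I × ℕ+) →₀ K) →ₗ[K] ((I × ℕ+) →₀ K),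
      (∀ x y z : (I × ℕ+) →₀ K, mul (mul x y) z = mul x (mul y z)) ∧
      (∀ (i j : I) (m n : ℕ+),
        (HasPath r (m : ℕ) i j →
          mul (Finsupp.single (j, n) 1) (Finsupp.single (i, m) 1) =
            Finsupp.single (i, m + n) 1) ∧
        (¬ HasPath r (m : ℕ) i j →
          mul (Finsupp.single (j, n) 1) (Finsupp.single (i, m) 1) = 0)) := by
  refine ⟨pathMul K r, pathMul_assoc hca, fun i j m n => ⟨fun h => ?_, fun h => ?_⟩⟩
  · simp [pathMul_single, basisMul, h]
  · simp [pathMul_single, basisMul, h]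
end

section
/- There exists a Lie K-algebra structure on L whose bracket satisfies, for all k, l ≥ 1, all 1 ≤ i, i' ≤ M and all 1 ≤ j, j' ≤ N: ⁅e(k), e(l)⁆ = (l−k)·e(k+l); ⁅e(k), f^{(i)}(l)⁆ = l·f^{(i)}(k+l); ⁅e(k), g^{(j)}(l)⁆ = (l + c_j)·g^{(j)}(k+l); ⁅f^{(i)}(k), f^{(i')}(l)⁆ = 0; ⁅f^{(i)}(k), g^{(j)}(l)⁆ = υ^{(j)}_i·g^{(j)}(k+l); ⁅g^{(j)}(k), g^{(j')}(l)⁆ = 0. (This Lie algebra is the iterated semidirect product (W_{c_1,υ^{(1)}} ⊕ ⋯ ⊕ W_{c_N,υ^{(N)}}) ⋊ (V_0^M ⋊ g_FdB), where g_FdB is the Faà di Bruno Lie algebra.) -/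
/-!
The bracket is the bilinear extension of its values on pairs of basis symbols, with the values
on `(f, e)`, `(g, e)` and `(g, f)` dictated by antisymmetry. Antisymmetry and the Jacobi identity
are multilinear, so they need only be verified on multiples of basis symbols
(`fdbBracket_antisymm`, `fdbBracket_jacobi_single`). There, all brackets respect the grading by the positive integer
label, so each case is an identity between scalar coefficients; the essential ones are
`m (l + m) - m (k + m) = (l - k) m` for `(e, e, f)`,
`(m + c) (l + m + c) - (m + c) (k + m + c) = (l - k) (m + c)` for `(e, e, g)`, and
`υ (l + m + c) - (m + c) υ = l υ` for `(e, f, g)`.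
-/

/-- Basis symbols `e(k)`, `f^{(i)}(k)` (`1 ≤ i ≤ M`), `g^{(j)}(k)` (`1 ≤ j ≤ N`),
with `k ≥ 1`. -/
inductive FdBIdx (M N : ℕ) where
  | e : ℕ+ → FdBIdx M N
  | f : Fin M → ℕ+ → FdBIdx M N
  | g : Fin N → ℕ+ → FdBIdx M N

/-- The bracket of two basis symbols. -/
noncomputable def fdbBasisBracket {K : Type*} [Field K] {M N : ℕ}
    (c : Fin N → K) (υ : Fin M → Fin N → K) : FdBIdx M N → FdBIdx M N → (FdBIdx M N →₀ K)
  | .e k, .e l => Finsupp.single (.e (k + l)) (((l : ℕ) : K) - ((k : ℕ) : K))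
  | .e k, .f i l => Finsupp.single (.f i (k + l)) ((l : ℕ) : K)
  | .e k, .g j l => Finsupp.single (.g j (k + l)) (((l : ℕ) : K) + c j)
  | .f i k, .e l => Finsupp.single (.f i (k + l)) (-((k : ℕ) : K))
  | .f _ _, .f _ _ => 0
  | .f i k, .g j l => Finsupp.single (.g j (k + l)) (υ i j)
  | .g j k, .e l => Finsupp.single (.g j (k + l)) (-(((k : ℕ) : K) + c j))
  | .g j k, .f i l => Finsupp.single (.g j (k + l)) (-υ i j)
  | .g _ _, .g _ _ => 0

/-- The bilinear extension of `fdbBasisBracket`. -/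
noncomputable def fdbBracket {K : Type*} [Field K] {M N : ℕ}
    (c : Fin N → K) (υ : Fin M → Fin N → K) :
    (FdBIdx M N →₀ K) →ₗ[K] (FdBIdx M N →₀ K) →ₗ[K] (FdBIdx M N →₀ K) :=
  Finsupp.linearCombination K fun a => Finsupp.linearCombination K (fdbBasisBracket c υ a)

theorem fdbBracket_single {K : Type*} [Field K] {M N : ℕ}
    (c : Fin N → K) (υ : Fin M → Fin N → K) (a b : FdBIdx M N) (r s : K) :
    fdbBracket c υ (Finsupp.single a r) (Finsupp.single b s) =
      (r * s) • fdbBasisBracket c υ a b := by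
  simp [fdbBracket, mul_smul]

theorem fdbBracket_antisymm {K : Type*} [Field K] {M N : ℕ}
    (c : Fin N → K) (υ : Fin M → Fin N → K) (x y : FdBIdx M N →₀ K) :
    fdbBracket c υ x y + fdbBracket c υ y x = 0 := by
  induction x using Finsupp.induction_linear with
  | zero => simp
  | add x x' hx hx' =>
    simp only [map_add, LinearMap.add_apply]
    linear_combination (norm := module) hx + hx'
  | single a r =>
    induction y using Finsupp.induction_linear with
    | zero => simp
    | add y y' hy hy' =>
      simp only [map_add, LinearMap.add_apply]
      linear_combination (norm := module) hy + hy'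
    | single b s =>
      rw [fdbBracket_single, fdbBracket_single, mul_comm s r, ← smul_add]
      rcases a with k | ⟨i, k⟩ | ⟨j, k⟩ <;> rcases b with l | ⟨i', l⟩ | ⟨j', l⟩ <;>
        simp [fdbBasisBracket, add_comm l k, ← Finsupp.single_add]

theorem fdbBracket_jacobi_single {K : Type*} [Field K] {M N : ℕ}
    (c : Fin N → K) (υ : Fin M → Fin N → K) (a b d : FdBIdx M N) (r s t : K) :
    fdbBracket c υ (.single a r) (fdbBracket c υ (.single b s) (.single d t)) +
      fdbBracket c υ (.single b s) (fdbBracket c υ (.single d t) (.single a r)) +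
      fdbBracket c υ (.single d t) (fdbBracket c υ (.single a r) (.single b s)) = 0 := by
  rcases a with k | ⟨i, k⟩ | ⟨j, k⟩ <;> rcases b with l | ⟨i', l⟩ | ⟨j', l⟩ <;>
    rcases d with m | ⟨i'', m⟩ | ⟨j'', m⟩ <;>
    simp only [fdbBracket_single, fdbBasisBracket, Finsupp.smul_single, smul_zero, map_zero,
      add_zero, zero_add, smul_eq_mul,
      show l + (m + k) = k + (l + m) by ring, show m + (k + l) = k + (l + m) by ring,
      ← Finsupp.single_add, Finsupp.single_eq_zero, PNat.add_coe, Nat.cast_add] <;>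
    ring

theorem fdbBracket_jacobi {K : Type*} [Field K] {M N : ℕ}
    (c : Fin N → K) (υ : Fin M → Fin N → K) (x y z : FdBIdx M N →₀ K) :
    fdbBracket c υ x (fdbBracket c υ y z) + fdbBracket c υ y (fdbBracket c υ z x) +
      fdbBracket c υ z (fdbBracket c υ x y) = 0 := by
  induction x using Finsupp.induction_linear with
  | zero => simp
  | add x x' hx hx' =>
    simp only [map_add, LinearMap.add_apply]
    linear_combination (norm := module) hx + hx'
  | single a r =>
    induction y using Finsupp.induction_linear with
    | zero => simp
    | add y y' hy hy' =>
      simp only [map_add, LinearMap.add_apply]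
      linear_combination (norm := module) hy + hy'
    | single b s =>
      induction z using Finsupp.induction_linear with
      | zero => simp
      | add z z' hz hz' =>
        simp only [map_add, LinearMap.add_apply]
        linear_combination (norm := module) hz + hz'
      | single d t => exact fdbBracket_jacobi_single c υ a b d r s t

/-- Existence of the Lie algebra
`(W_{c_1,υ^{(1)}} ⊕ ⋯ ⊕ W_{c_N,υ^{(N)}}) ⋊ (V_0^M ⋊ g_FdB)` with the indicated
brackets on the basis. -/
theorem stmt_9 {K : Type*} [Field K] [CharZero K] (M N : ℕ)
    (c : Fin N → K) (υ : Fin M → Fin N → K) :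
    ∃ br : (FdBIdx M N →₀ K) →ₗ[K] (FdBIdx M N →₀ K) →ₗ[K] (FdBIdx M N →₀ K),
      (∀ x, br x x = 0) ∧
      (∀ x y z, br x (br y z) + br y (br z x) + br z (br x y) = 0) ∧
      (∀ k l : ℕ+,
        br (Finsupp.single (FdBIdx.e k) 1) (Finsupp.single (FdBIdx.e l) 1) =
          Finsupp.single (FdBIdx.e (k + l)) (((l : ℕ) : K) - ((k : ℕ) : K))) ∧
      (∀ (i : Fin M) (k l : ℕ+),
        br (Finsupp.single (FdBIdx.e k) 1) (Finsupp.single (FdBIdx.f i l) 1) =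
          Finsupp.single (FdBIdx.f i (k + l)) ((l : ℕ) : K)) ∧
      (∀ (j : Fin N) (k l : ℕ+),
        br (Finsupp.single (FdBIdx.e k) 1) (Finsupp.single (FdBIdx.g j l) 1) =
          Finsupp.single (FdBIdx.g j (k + l)) (((l : ℕ) : K) + c j)) ∧
      (∀ (i i' : Fin M) (k l : ℕ+),
        br (Finsupp.single (FdBIdx.f i k) 1) (Finsupp.single (FdBIdx.f i' l) 1) = 0) ∧
      (∀ (i : Fin M) (j : Fin N) (k l : ℕ+),
        br (Finsupp.single (FdBIdx.f i k) 1) (Finsupp.single (FdBIdx.g j l) 1) =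
          Finsupp.single (FdBIdx.g j (k + l)) (υ i j)) ∧
      (∀ (j j' : Fin N) (k l : ℕ+),
        br (Finsupp.single (FdBIdx.g j k) 1) (Finsupp.single (FdBIdx.g j' l) 1) = 0) := by
  refine ⟨fdbBracket c υ, fun x => ?_, fdbBracket_jacobi c υ, ?_, ?_, ?_, ?_, ?_, ?_⟩
  -- Antisymmetry gives `2 [x, x] = 0`, and `2` is invertible in characteristic zero.
  · exact self_eq_neg.mp (eq_neg_of_add_eq_zero_left (fdbBracket_antisymm c υ x x))
  all_goals intros; simp [fdbBracket_single, fdbBasisBracket]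
end

section
/- The endomorphisms E_k and F_{i,k} of W satisfy, for all k, l ≥ 1 and all 1 ≤ i, i' ≤ M: E_k∘E_l − E_l∘E_k = (l−k)·E_{k+l}; E_k∘F_{i,l} − F_{i,l}∘E_k = l·F_{i,k+l}; F_{i,k}∘F_{i',l} − F_{i',l}∘F_{i,k} = 0. (Thus W_{c,υ} is a module over the Lie algebra V_0^M ⋊ g_FdB.) -/
/-- Homogeneity upgrades the values on basis vectors to values on all monomials `x·w(l)`, so that
compositions can be evaluated. -/
lemma map_single_of_map_single_one {K : Type*} [Field K]
    {T : (ℕ+ →₀ K) →ₗ[K] (ℕ+ →₀ K)} {l m : ℕ+} {a : K}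
    (h : T (Finsupp.single l 1) = Finsupp.single m a) (x : K) :
    T (Finsupp.single l x) = Finsupp.single m (x * a) := by
  have hx : (Finsupp.single l x : ℕ+ →₀ K) = x • Finsupp.single l 1 := by simp
  rw [hx, map_smul, h, Finsupp.smul_single, smul_eq_mul]

/-- The endomorphisms `E_k(w(l)) = (l+c)·w(k+l)` and
`F_{i,k}(w(l)) = υ_i·w(k+l)` make `W_{c,υ}` a module over `V_0^M ⋊ g_FdB`. -/
theorem stmt_10 {K : Type*} [Field K] [CharZero K] (M : ℕ)
    (c : K) (υ : Fin M → K)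
    (E : ℕ+ → ((ℕ+ →₀ K) →ₗ[K] (ℕ+ →₀ K)))
    (F : Fin M → ℕ+ → ((ℕ+ →₀ K) →ₗ[K] (ℕ+ →₀ K)))
    (hE : ∀ k l : ℕ+,
      E k (Finsupp.single l 1) = Finsupp.single (k + l) (((l : ℕ) : K) + c))
    (hF : ∀ (i : Fin M) (k l : ℕ+),
      F i k (Finsupp.single l 1) = Finsupp.single (k + l) (υ i)) :
    (∀ k l : ℕ+,
      E k ∘ₗ E l - E l ∘ₗ E k = (((l : ℕ) : K) - ((k : ℕ) : K)) • E (k + l)) ∧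
    (∀ (i : Fin M) (k l : ℕ+),
      E k ∘ₗ F i l - F i l ∘ₗ E k = ((l : ℕ) : K) • F i (k + l)) ∧
    (∀ (i i' : Fin M) (k l : ℕ+),
      F i k ∘ₗ F i' l - F i' l ∘ₗ F i k = 0) := by
  -- On `w(m)` both orders of composition give multiples of `w(k + l + m)`, and the coefficients
  -- are compared: for instance `(m+c)(l+m+c) - (m+c)(k+m+c) = (l-k)(m+c)` in the first case.
  have hE' := fun k l => map_single_of_map_single_one (hE k l)
  have hF' := fun i k l => map_single_of_map_single_one (hF i k l)
  refine ⟨fun k l => ?_, fun i k l => ?_, fun i i' k l => ?_⟩ <;>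
  · refine Finsupp.lhom_ext' fun m => LinearMap.ext_ring ?_
    simp only [LinearMap.comp_apply, LinearMap.sub_apply, LinearMap.smul_apply,
      LinearMap.zero_apply, Finsupp.lsingle_apply, hE', hF', Finsupp.smul_single, smul_eq_mul,
      add_left_comm l k m, ← add_assoc k l m, ← Finsupp.single_sub, PNat.add_coe, Nat.cast_add]
    first
    | exact Finsupp.single_eq_zero.mpr (by ring1)
    | exact congrArg _ (by ring1)
end

section
/- The endomorphisms E_k and F_{i,k} of W defining the module W'_{ν,0} satisfy, for all k, l ≥ 1 and all 1 ≤ i, i' ≤ M: E_k∘E_l − E_l∘E_k = (l−k)·E_{k+l}; E_k∘F_{i,l} − F_{i,l}∘E_k = l·F_{i,k+l}; F_{i,k}∘F_{i',l} − F_{i',l}∘F_{i,k} = 0. (Together with the zero action of the basis elements g^{(j)}(k), this makes W'_{ν,0} a module over the Lie algebra (W_{c_1,υ^{(1)}} ⊕ ⋯ ⊕ W_{c_N,υ^{(N)}}) ⋊ (V_0^M ⋊ g_FdB).) -/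
/-!
All identities are checked on the basis `h(m)`. Both sides of the first send `h(m)` to
`(m - 1)(l - k) h(k + l + m)`. For the other two, every `E_k` and `F_{i,k}` maps `W` into the span
of the `h(n)` with `n ≥ 2`, on which all `F_{i,k}` vanish; so only `E_k ∘ F_{i,l}` on `h(1)`
contributes, with coefficient `(l + 1) - 1 = l`.
-/

/-- The endomorphisms `E_k(h(l)) = (l−1)·h(k+l)`,
`F_{i,k}(h(1)) = ν_i·h(k+1)`, `F_{i,k}(h(l)) = 0` for `l ≥ 2`, defining the
module `W'_{ν,0}`, satisfy the commutation relations of `V_0^M ⋊ g_FdB`. -/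
theorem stmt_11 {K : Type*} [Field K] [CharZero K] (M : ℕ)
    (ν : Fin M → K)
    (E : ℕ+ → ((ℕ+ →₀ K) →ₗ[K] (ℕ+ →₀ K)))
    (F : Fin M → ℕ+ → ((ℕ+ →₀ K) →ₗ[K] (ℕ+ →₀ K)))
    (hE : ∀ k l : ℕ+,
      E k (Finsupp.single l 1) = Finsupp.single (k + l) (((l : ℕ) : K) - 1))
    (hF1 : ∀ (i : Fin M) (k : ℕ+),
      F i k (Finsupp.single 1 1) = Finsupp.single (k + 1) (ν i))
    (hF2 : ∀ (i : Fin M) (k l : ℕ+), 2 ≤ (l : ℕ) →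
      F i k (Finsupp.single l 1) = 0) :
    (∀ k l : ℕ+,
      E k ∘ₗ E l - E l ∘ₗ E k = (((l : ℕ) : K) - ((k : ℕ) : K)) • E (k + l)) ∧
    (∀ (i : Fin M) (k l : ℕ+),
      E k ∘ₗ F i l - F i l ∘ₗ E k = ((l : ℕ) : K) • F i (k + l)) ∧
    (∀ (i i' : Fin M) (k l : ℕ+),
      F i k ∘ₗ F i' l - F i' l ∘ₗ F i k = 0) := by
  have hE' : ∀ (k l : ℕ+) (c : K),
      E k (Finsupp.single l c) = Finsupp.single (k + l) (c * (((l : ℕ) : K) - 1)) := by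
    intro k l c
    rw [← mul_one c, ← smul_eq_mul, ← Finsupp.smul_single, map_smul, hE, Finsupp.smul_single]
    simp
  have hF1' : ∀ (i : Fin M) (k : ℕ+) (c : K),
      F i k (Finsupp.single 1 c) = Finsupp.single (k + 1) (c * ν i) := by
    intro i k c
    rw [← mul_one c, ← smul_eq_mul, ← Finsupp.smul_single, map_smul, hF1, Finsupp.smul_single]
    simp
  have hF2' : ∀ (i : Fin M) (k a b : ℕ+) (c : K),
      F i k (Finsupp.single (a + b) c) = 0 := by
    intro i k a b c
    have h : 2 ≤ ((a + b : ℕ+) : ℕ) := by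
      have := a.pos
      have := b.pos
      rw [PNat.add_coe]
      omega
    rw [← mul_one c, ← smul_eq_mul, ← Finsupp.smul_single, map_smul, hF2 i k _ h, smul_zero]
  -- Every basis index is `1` or a sum of two positive integers.
  have hcases : ∀ m : ℕ+, m = 1 ∨ ∃ a : ℕ+, m = a + 1 := by
    intro m
    induction m using PNat.recOn with
    | one => exact Or.inl rfl
    | succ n _ => exact Or.inr ⟨n, rfl⟩
  refine ⟨fun k l => ?_, fun i k l => ?_, fun i i' k l => ?_⟩
  · refine Finsupp.lhom_ext fun m c => ?_
    simp only [LinearMap.sub_apply, LinearMap.comp_apply, LinearMap.smul_apply, hE',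
      Finsupp.smul_single, smul_eq_mul]
    rw [← add_assoc, ← add_assoc, add_comm l k, ← Finsupp.single_sub]
    congr 1
    push_cast
    ring
  · refine Finsupp.lhom_ext fun m c => ?_
    obtain rfl | ⟨a, rfl⟩ := hcases m
    · simp only [LinearMap.sub_apply, LinearMap.comp_apply, LinearMap.smul_apply, hE', hF1',
        hF2', Finsupp.smul_single, smul_eq_mul, sub_zero]
      rw [← add_assoc]
      congr 1
      push_cast
      ring
    · simp only [LinearMap.sub_apply, LinearMap.comp_apply, LinearMap.smul_apply, hE', hF2', map_zero,
        smul_zero, sub_zero]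
  · refine Finsupp.lhom_ext fun m c => ?_
    obtain rfl | ⟨a, rfl⟩ := hcases m
    · simp only [LinearMap.sub_apply, LinearMap.comp_apply, LinearMap.zero_apply, hF1', hF2',
        sub_zero]
    · simp [hF2']
end

section
/- The endomorphisms E_k and F_{i,k} of W defining the module W'_{ν,1} satisfy, for all k, l ≥ 1 and all 1 ≤ i, i' ≤ M: E_k∘E_l − E_l∘E_k = (l−k)·E_{k+l}; E_k∘F_{i,l} − F_{i,l}∘E_k = l·F_{i,k+l}; F_{i,k}∘F_{i',l} − F_{i',l}∘F_{i,k} = 0. (Together with the zero action of the basis elements g^{(j)}(k), this makes W'_{ν,1} a module over the Lie algebra (W_{c_1,υ^{(1)}} ⊕ ⋯ ⊕ W_{c_N,υ^{(N)}}) ⋊ (V_0^M ⋊ g_FdB).) -/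
/-!
Both sides of each relation are linear, so it suffices to compare them on the basis `h(m)`.
Every `E_k` and `F_{i,k}` raises the index `m ≥ 1` by `k ≥ 1`, so its values lie in the span of
the `h(l)` with `l ≥ 2`. On that span `E_k` acts by the uniform rule `h(l) ↦ (l - 1) h(k + l)`
and all `F_{i,k}` vanish. Hence products `F ∘ F` and `F ∘ E` are zero, while
`E_k E_l h(1) = l h(k + l + 1)`, `E_k E_l h(m) = (m - 1)(l + m - 1) h(k + l + m)` for `m ≥ 2`,
and `E_k F_{i,l} h(1) = l ν_i h(k + l + 1)`.
-/

/-- The endomorphisms `E_k(h(1)) = h(k+1)`,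
`E_k(h(l)) = (l−1)·h(k+l)` for `l ≥ 2`, `F_{i,k}(h(1)) = ν_i·h(k+1)`,
`F_{i,k}(h(l)) = 0` for `l ≥ 2`, defining the module `W'_{ν,1}`, satisfy the
commutation relations of `V_0^M ⋊ g_FdB`. -/
theorem stmt_12 {K : Type*} [Field K] [CharZero K] (M : ℕ)
    (ν : Fin M → K)
    (E : ℕ+ → ((ℕ+ →₀ K) →ₗ[K] (ℕ+ →₀ K)))
    (F : Fin M → ℕ+ → ((ℕ+ →₀ K) →ₗ[K] (ℕ+ →₀ K)))
    (hE1 : ∀ k : ℕ+, E k (Finsupp.single 1 1) = Finsupp.single (k + 1) 1)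
    (hE2 : ∀ k l : ℕ+, 2 ≤ (l : ℕ) →
      E k (Finsupp.single l 1) = Finsupp.single (k + l) (((l : ℕ) : K) - 1))
    (hF1 : ∀ (i : Fin M) (k : ℕ+),
      F i k (Finsupp.single 1 1) = Finsupp.single (k + 1) (ν i))
    (hF2 : ∀ (i : Fin M) (k l : ℕ+), 2 ≤ (l : ℕ) →
      F i k (Finsupp.single l 1) = 0) :
    (∀ k l : ℕ+,
      E k ∘ₗ E l - E l ∘ₗ E k = (((l : ℕ) : K) - ((k : ℕ) : K)) • E (k + l)) ∧
    (∀ (i : Fin M) (k l : ℕ+),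
      E k ∘ₗ F i l - F i l ∘ₗ E k = ((l : ℕ) : K) • F i (k + l)) ∧
    (∀ (i i' : Fin M) (k l : ℕ+),
      F i k ∘ₗ F i' l - F i' l ∘ₗ F i k = 0) := by
  -- Rules for arbitrary coefficients on the part of the basis of index `k + m ≥ 2`.
  have two_le (k m : ℕ+) : 2 ≤ ((k + m : ℕ+) : ℕ) := by
    have := k.pos; have := m.pos; rw [PNat.add_coe]; omega
  have hE (k l m : ℕ+) (c : K) : E k (Finsupp.single (l + m) c) =
      Finsupp.single (k + (l + m)) (c * ((l : ℕ) + (m : ℕ) - 1)) := by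
    rw [← mul_one c, ← smul_eq_mul, ← Finsupp.smul_single, map_smul, hE2 k _ (two_le l m),
      Finsupp.smul_single, smul_eq_mul, smul_eq_mul, mul_one, PNat.add_coe, Nat.cast_add]
  have hF (i : Fin M) (k l m : ℕ+) (c : K) : F i k (Finsupp.single (l + m) c) = 0 := by
    rw [← mul_one c, ← smul_eq_mul, ← Finsupp.smul_single, map_smul, hF2 i k _ (two_le l m),
      smul_zero]
  have cases_one (m : ℕ+) : m = 1 ∨ 2 ≤ (m : ℕ) := by
    rcases eq_or_ne m 1 with h | h
    · exact Or.inl h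
    · have h1 : (m : ℕ) ≠ 1 := fun e => h (PNat.eq e)
      have := m.pos
      exact Or.inr (by omega)
  refine ⟨fun k l => ?_, fun i k l => ?_, fun i i' k l => ?_⟩ <;>
    refine Finsupp.lhom_ext' fun m => LinearMap.ext_ring ?_ <;>
    simp only [LinearMap.comp_apply, LinearMap.sub_apply, LinearMap.smul_apply,
      LinearMap.zero_apply, Finsupp.lsingle_apply] <;>
    rcases cases_one m with rfl | hm
  · rw [hE1, hE1, hE1, hE, hE, ← add_assoc, ← add_assoc, add_comm l k, ← Finsupp.single_sub,
      Finsupp.smul_single, smul_eq_mul]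
    congr 1
    push_cast
    ring
  · rw [hE2 _ _ hm, hE2 _ _ hm, hE2 _ _ hm, hE, hE, ← add_assoc, ← add_assoc, add_comm l k,
      ← Finsupp.single_sub, Finsupp.smul_single, smul_eq_mul]
    congr 1
    ring
  · rw [hF1, hF1, hE1, hF, hE, sub_zero, ← add_assoc, Finsupp.smul_single, smul_eq_mul]
    congr 1
    push_cast
    ring
  · rw [hF2 _ _ _ hm, hF2 _ _ _ hm, hE2 _ _ hm, hF]
    simp
  · rw [hF1, hF1, hF, hF, sub_zero]
  · rw [hF2 _ _ _ hm, hF2 _ _ _ hm]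
    simp
end

section
/- Assume that μ_j·(1 + c − c_j) = 0 for every 1 ≤ j ≤ N and μ_j·(ν_i − υ^{(j)}_i) = 0 for all 1 ≤ i ≤ M, 1 ≤ j ≤ N. Then the endomorphisms E_k, F_{i,k}, G_{j,k} of W defining the module W''_{c,ν,μ} satisfy, for all k, l ≥ 1, all 1 ≤ i, i' ≤ M and all 1 ≤ j, j' ≤ N: E_k∘E_l − E_l∘E_k = (l−k)·E_{k+l}; E_k∘F_{i,l} − F_{i,l}∘E_k = l·F_{i,k+l}; E_k∘G_{j,l} − G_{j,l}∘E_k = (l + c_j)·G_{j,k+l}; F_{i,k}∘F_{i',l} − F_{i',l}∘F_{i,k} = 0; F_{i,k}∘G_{j,l} − G_{j,l}∘F_{i,k} = υ^{(j)}_i·G_{j,k+l}; G_{j,k}∘G_{j',l} − G_{j',l}∘G_{j,k} = 0. (Thus W''_{c,ν,μ} is a module over the Lie algebra (W_{c_1,υ^{(1)}} ⊕ ⋯ ⊕ W_{c_N,υ^{(N)}}) ⋊ (V_0^M ⋊ g_FdB).) -/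
/-! Both sides of each relation are linear, so it suffices to compare them on a basis vector `h(m)`.
There the brackets of the `E`s and `F`s reduce to polynomial identities in the coefficients.
Every operator raises the index by at least one, so `G` kills the image of each of them: in the
brackets with `G` only the term in which `G` acts first survives, and only on `h(1)`, where the two
sides agree precisely because of the compatibility conditions on `c` and `ν`. -/


/-- Under the compatibility conditions `μ_j(1 + c − c_j) = 0` and
`μ_j(ν_i − υ^{(j)}_i) = 0`, the endomorphisms `E_k(h(l)) = (l+c)·h(k+l)`,
`F_{i,k}(h(l)) = ν_i·h(k+l)`, `G_{j,k}(h(1)) = μ_j·h(k+1)`, `G_{j,k}(h(l)) = 0`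
for `l ≥ 2`, defining the module `W''_{c,ν,μ}`, satisfy the commutation
relations of `(W_{c_1,υ^{(1)}} ⊕ ⋯ ⊕ W_{c_N,υ^{(N)}}) ⋊ (V_0^M ⋊ g_FdB)`. -/
theorem stmt_13 {K : Type*} [Field K] [CharZero K] (M N : ℕ)
    (cc : Fin N → K) (υ : Fin M → Fin N → K)
    (c : K) (ν : Fin M → K) (μ : Fin N → K)
    (E : ℕ+ → ((ℕ+ →₀ K) →ₗ[K] (ℕ+ →₀ K)))
    (F : Fin M → ℕ+ → ((ℕ+ →₀ K) →ₗ[K] (ℕ+ →₀ K)))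
    (G : Fin N → ℕ+ → ((ℕ+ →₀ K) →ₗ[K] (ℕ+ →₀ K)))
    (hμc : ∀ j : Fin N, μ j * (1 + c - cc j) = 0)
    (hμν : ∀ (i : Fin M) (j : Fin N), μ j * (ν i - υ i j) = 0)
    (hE : ∀ k l : ℕ+,
      E k (Finsupp.single l 1) = Finsupp.single (k + l) (((l : ℕ) : K) + c))
    (hF : ∀ (i : Fin M) (k l : ℕ+),
      F i k (Finsupp.single l 1) = Finsupp.single (k + l) (ν i))
    (hG1 : ∀ (j : Fin N) (k : ℕ+),
      G j k (Finsupp.single 1 1) = Finsupp.single (k + 1) (μ j))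
    (hG2 : ∀ (j : Fin N) (k l : ℕ+), 2 ≤ (l : ℕ) →
      G j k (Finsupp.single l 1) = 0) :
    (∀ k l : ℕ+,
      E k ∘ₗ E l - E l ∘ₗ E k = (((l : ℕ) : K) - ((k : ℕ) : K)) • E (k + l)) ∧
    (∀ (i : Fin M) (k l : ℕ+),
      E k ∘ₗ F i l - F i l ∘ₗ E k = ((l : ℕ) : K) • F i (k + l)) ∧
    (∀ (j : Fin N) (k l : ℕ+),
      E k ∘ₗ G j l - G j l ∘ₗ E k = (((l : ℕ) : K) + cc j) • G j (k + l)) ∧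
    (∀ (i i' : Fin M) (k l : ℕ+),
      F i k ∘ₗ F i' l - F i' l ∘ₗ F i k = 0) ∧
    (∀ (i : Fin M) (j : Fin N) (k l : ℕ+),
      F i k ∘ₗ G j l - G j l ∘ₗ F i k = υ i j • G j (k + l)) ∧
    (∀ (j j' : Fin N) (k l : ℕ+),
      G j k ∘ₗ G j' l - G j' l ∘ₗ G j k = 0) := by
  have ext1 : ∀ {A B : (ℕ+ →₀ K) →ₗ[K] (ℕ+ →₀ K)},
      (∀ m : ℕ+, A (Finsupp.single m 1) = B (Finsupp.single m 1)) → A = B :=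
    fun h => Finsupp.lhom_ext' fun m => LinearMap.ext_ring (h m)
  have scale : ∀ (A : (ℕ+ →₀ K) →ₗ[K] (ℕ+ →₀ K)) (m : ℕ+) (a : K),
      A (Finsupp.single m a) = a • A (Finsupp.single m 1) := fun A m a => by
    rw [← map_smul, Finsupp.smul_single_one]
  have hE' : ∀ (k l : ℕ+) (a : K),
      E k (Finsupp.single l a) = Finsupp.single (k + l) (a * (((l : ℕ) : K) + c)) :=
    fun k l a => by rw [scale, hE, Finsupp.smul_single, smul_eq_mul]
  have hF' : ∀ (i : Fin M) (k l : ℕ+) (a : K),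
      F i k (Finsupp.single l a) = Finsupp.single (k + l) (a * ν i) :=
    fun i k l a => by rw [scale, hF, Finsupp.smul_single, smul_eq_mul]
  have hG' : ∀ (j : Fin N) (k l m : ℕ+) (a : K), G j k (Finsupp.single (l + m) a) = 0 :=
    fun j k l m a => by
      rw [scale, hG2, smul_zero]
      have := l.pos
      have := m.pos
      rw [PNat.add_coe]
      omega
  have cases1 : ∀ m : ℕ+, m = 1 ∨ 2 ≤ (m : ℕ) := fun m => by
    rcases eq_or_ne m 1 with h | h
    · exact Or.inl h
    · have h1 : (m : ℕ) ≠ 1 := fun h' => h (PNat.coe_eq_one_iff.mp h')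
      have := m.pos
      exact Or.inr (by omega)
  refine ⟨fun k l => ext1 fun m => ?_, fun i k l => ext1 fun m => ?_,
    fun j k l => ext1 fun m => ?_, fun i i' k l => ext1 fun m => ?_,
    fun i j k l => ext1 fun m => ?_, fun j j' k l => ext1 fun m => ?_⟩
  · simp only [LinearMap.sub_apply, LinearMap.comp_apply, LinearMap.smul_apply, hE',
      Finsupp.smul_single, smul_eq_mul]
    rw [← add_assoc, add_left_comm l k m, ← add_assoc, ← Finsupp.single_sub]
    congr 1
    push_cast
    ring
  · simp only [LinearMap.sub_apply, LinearMap.comp_apply, LinearMap.smul_apply, hE', hF',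
      Finsupp.smul_single, smul_eq_mul]
    rw [← add_assoc, add_left_comm l k m, ← add_assoc, ← Finsupp.single_sub]
    congr 1
    push_cast
    ring
  · simp only [LinearMap.sub_apply, LinearMap.comp_apply, LinearMap.smul_apply]
    rcases cases1 m with rfl | hm
    · simp only [hG1, hE', hG', sub_zero, Finsupp.smul_single, smul_eq_mul]
      rw [← add_assoc]
      congr 1
      push_cast
      linear_combination hμc j
    · simp only [hG2 _ _ m hm, hE', hG', map_zero, sub_zero, smul_zero]
  · simp only [LinearMap.sub_apply, LinearMap.comp_apply, LinearMap.zero_apply, hF']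
    rw [add_left_comm l k m, ← Finsupp.single_sub, Finsupp.single_eq_zero]
    ring
  · simp only [LinearMap.sub_apply, LinearMap.comp_apply, LinearMap.smul_apply]
    rcases cases1 m with rfl | hm
    · simp only [hG1, hF', hG', sub_zero, Finsupp.smul_single, smul_eq_mul]
      rw [← add_assoc]
      congr 1
      linear_combination hμν i j
    · simp only [hG2 _ _ m hm, hF', hG', map_zero, sub_zero, smul_zero]
  · simp only [LinearMap.sub_apply, LinearMap.comp_apply, LinearMap.zero_apply]
    rcases cases1 m with rfl | hm
    · simp only [hG1, hG', sub_zero]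
    · simp only [hG2 _ _ m hm, map_zero, sub_zero]
end

section
/- The endomorphisms E_{i,k} and F_{j,k} of W satisfy the identities E_{i,k}∘E_{i',l} − E_{i',l}∘E_{i,k} = 0, E_{i,k}∘F_{j,l} − F_{j,l}∘E_{i,k} = υ^{(j)}_i·F_{j,k+l} and F_{j,k}∘F_{j',l} − F_{j',l}∘F_{j,k} = 0 for all k, l ≥ 1, 1 ≤ i, i' ≤ M and 1 ≤ j, j' ≤ N (i.e. W'_{ν,μ} is a module over the Lie algebra (V_{υ^{(1)}} ⊕ ⋯ ⊕ V_{υ^{(N)}}) ⋊ g_ab) if and only if μ_j·(ν_i − υ^{(j)}_i) = 0 for all 1 ≤ i ≤ M and 1 ≤ j ≤ N. -/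
/-!
All the identities are checked on the basis vectors `g(l) = Finsupp.single l 1`.
The shifts `E_{i,k}` commute because addition of indices does. A positive shift moves every
basis vector out of reach of the operators `F_{j,k}`, which see only `g(1)`, so
`F_{j,k} ∘ F_{j',l} = 0` and `F_{j,l} ∘ E_{i,k} = 0`. The only condition left is
`E_{i,k} ∘ F_{j,l} = υ^{(j)}_i • F_{j,k+l}`, which is trivial on `g(l)` for `l ≥ 2` and reads
`μ_j ν_i g(k+l+1) = υ^{(j)}_i μ_j g(k+l+1)` on `g(1)`.
-/

/-- The endomorphisms `E_{i,k}(g(l)) = ν_i·g(k+l)`,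
`F_{j,k}(g(1)) = μ_j·g(k+1)`, `F_{j,k}(g(l)) = 0` for `l ≥ 2`, make `W'_{ν,μ}`
a module over `(V_{υ^{(1)}} ⊕ ⋯ ⊕ V_{υ^{(N)}}) ⋊ g_ab` if and only if
`μ_j·(ν_i − υ^{(j)}_i) = 0` for all `i`, `j`. -/
theorem stmt_15 {K : Type*} [Field K] [CharZero K] (M N : ℕ)
    (υ : Fin M → Fin N → K) (ν : Fin M → K) (μ : Fin N → K)
    (E : Fin M → ℕ+ → ((ℕ+ →₀ K) →ₗ[K] (ℕ+ →₀ K)))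
    (F : Fin N → ℕ+ → ((ℕ+ →₀ K) →ₗ[K] (ℕ+ →₀ K)))
    (hE : ∀ (i : Fin M) (k l : ℕ+),
      E i k (Finsupp.single l 1) = Finsupp.single (k + l) (ν i))
    (hF1 : ∀ (j : Fin N) (k : ℕ+),
      F j k (Finsupp.single 1 1) = Finsupp.single (k + 1) (μ j))
    (hF2 : ∀ (j : Fin N) (k l : ℕ+), 2 ≤ (l : ℕ) →
      F j k (Finsupp.single l 1) = 0) :
    ((∀ (i i' : Fin M) (k l : ℕ+),
        E i k ∘ₗ E i' l - E i' l ∘ₗ E i k = 0) ∧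
     (∀ (i : Fin M) (j : Fin N) (k l : ℕ+),
        E i k ∘ₗ F j l - F j l ∘ₗ E i k = υ i j • F j (k + l)) ∧
     (∀ (j j' : Fin N) (k l : ℕ+),
        F j k ∘ₗ F j' l - F j' l ∘ₗ F j k = 0))
    ↔ (∀ (i : Fin M) (j : Fin N), μ j * (ν i - υ i j) = 0) := by
  have single_eq (l : ℕ+) (c : K) : Finsupp.single l c = c • Finsupp.single l (1 : K) := by simp
  have hE' (i : Fin M) (k l : ℕ+) (c : K) :
      E i k (Finsupp.single l c) = Finsupp.single (k + l) (c * ν i) := by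
    rw [single_eq, map_smul, hE, Finsupp.smul_single, smul_eq_mul]
  have hF1' (j : Fin N) (k : ℕ+) (c : K) :
      F j k (Finsupp.single 1 c) = Finsupp.single (k + 1) (c * μ j) := by
    rw [single_eq, map_smul, hF1, Finsupp.smul_single, smul_eq_mul]
  have hF2' (j : Fin N) (k a b : ℕ+) (c : K) :
      F j k (Finsupp.single (a + b) c) = 0 := by
    have hab : 2 ≤ ((a + b : ℕ+) : ℕ) := by
      have := a.pos
      have := b.pos
      rw [PNat.add_coe]
      omega
    rw [single_eq, map_smul, hF2 j k _ hab, smul_zero]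
  constructor
  · rintro ⟨-, h, -⟩ i j
    -- Evaluated at `g(1)` with `k = l = 1`, the mixed bracket compares coefficients of `g(3)`.
    have h1 := LinearMap.congr_fun (h i j 1 1) (Finsupp.single 1 1)
    simp only [LinearMap.sub_apply, LinearMap.comp_apply, LinearMap.smul_apply, hE', hF1', hF2',
      sub_zero, Finsupp.smul_single, smul_eq_mul, one_mul, ← add_assoc] at h1
    have h2 := Finsupp.single_injective _ h1
    linear_combination h2
  · intro h
    refine ⟨fun i i' k l => ?_, fun i j k l => ?_, fun j j' k l => ?_⟩
    · refine Finsupp.lhom_ext fun m c => ?_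
      simp only [LinearMap.sub_apply, LinearMap.comp_apply, hE', LinearMap.zero_apply]
      rw [add_left_comm, mul_right_comm, sub_self]
    · refine Finsupp.lhom_ext fun m c => ?_
      by_cases hm : m = 1
      · subst hm
        simp only [LinearMap.sub_apply, LinearMap.comp_apply, LinearMap.smul_apply, hE', hF1',
          hF2', sub_zero, Finsupp.smul_single, smul_eq_mul, ← add_assoc]
        congr 1
        linear_combination c * h i j
      · obtain ⟨n, rfl⟩ := PNat.exists_eq_succ_of_ne_one hm
        simp [hE', hF2', -Finsupp.single_mul]
    · refine Finsupp.lhom_ext fun m c => ?_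
      by_cases hm : m = 1
      · subst hm
        simp [hF1', hF2', -Finsupp.single_mul]
      · obtain ⟨n, rfl⟩ := PNat.exists_eq_succ_of_ne_one hm
        simp [hF2']
end

section
/- Let A be a K-vector space equipped with a bilinear product ·. The following are equivalent: (i) the product · is permutative associative; (ii) for every K-vector space g equipped with a pre-Lie bilinear product ⋆, the unique bilinear product • on the tensor product g ⊗_K A satisfying (x⊗a)•(y⊗b) = (x⋆y)⊗(a·b) for all x, y ∈ g and a, b ∈ A is pre-Lie. -/
/-!
On pure tensors, with `X = x ⊗ a`, `Y = y ⊗ b`, `Z = z ⊗ c`, the pre-Lie identity on `g ⊗ A` reads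

  `(x⋆y)⋆z ⊗ (ab)c - x⋆(y⋆z) ⊗ a(bc) = (y⋆x)⋆z ⊗ (ba)c - y⋆(x⋆z) ⊗ b(ac)`.

If the product of `A` is permutative associative, the four right-hand factors coincide and the
identity reduces to the pre-Lie identity of `g`; it extends to all tensors by trilinearity.

Conversely, in the free pre-Lie algebra on `x, y, z` the elements `x⋆(y⋆z)`, `(y⋆x)⋆z` and
`y⋆(x⋆z)` are linearly independent, while `(x⋆y)⋆z = x⋆(y⋆z) + (y⋆x)⋆z - y⋆(x⋆z)`. Comparing the
coefficients of the first and the third one gives `(ab)c = a(bc)` and `(ab)c = b(ac)`. A nilpotent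
quotient of dimension 10, `testStar`, already separates these elements.
-/

/-- The product of a 10-dimensional pre-Lie algebra, a quotient of the free one on `x, y, z` in which
all products of four or more generators vanish. The coordinates `0, …, 9` are relative to the basis
`x, y, z, x⋆y, y⋆x, y⋆z, x⋆z, x⋆(y⋆z), (y⋆x)⋆z, y⋆(x⋆z)`; the coordinate `3` contributes to the last
three through `(x⋆y)⋆z = x⋆(y⋆z) + (y⋆x)⋆z - y⋆(x⋆z)`. -/
def testStar (K : Type) [Field K] : (Fin 10 → K) →ₗ[K] (Fin 10 → K) →ₗ[K] (Fin 10 → K) :=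
  LinearMap.mk₂ K
    (fun f g => ![0, 0, 0, f 0 * g 1, f 1 * g 0, f 1 * g 2, f 0 * g 2,
      f 0 * g 5 + f 3 * g 2, f 4 * g 2 + f 3 * g 2, f 1 * g 6 - f 3 * g 2])
    (by intro f f' g; ext i; fin_cases i <;> simp <;> ring)
    (by intro r f g; ext i; fin_cases i <;> simp <;> ring)
    (by intro f g g'; ext i; fin_cases i <;> simp <;> ring)
    (by intro r f g; ext i; fin_cases i <;> simp <;> ring)

lemma testStar_preLie (K : Type) [Field K] (x y z : Fin 10 → K) :
    testStar K (testStar K x y) z - testStar K x (testStar K y z) =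
      testStar K (testStar K y x) z - testStar K y (testStar K x z) := by
  ext i
  fin_cases i <;> simp [testStar] <;> ring

/-- A bilinear product on `A` is permutative associative if and
only if, for every pre-Lie algebra `g`, the product on `g ⊗ A` defined by
`(x⊗a)•(y⊗b) = (x⋆y)⊗(a·b)` is pre-Lie. -/
theorem stmt_16 {K : Type} [Field K] [CharZero K] {A : Type}
    [AddCommGroup A] [Module K A] (mulA : A →ₗ[K] A →ₗ[K] A) :
    ((∀ a b c : A, mulA (mulA a b) c = mulA a (mulA b c)) ∧
     (∀ a b c : A, mulA a (mulA b c) = mulA b (mulA a c)))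
    ↔
    (∀ (g : Type) [AddCommGroup g] [Module K g]
        (star : g →ₗ[K] g →ₗ[K] g),
      (∀ x y z : g, star (star x y) z - star x (star y z) =
        star (star y x) z - star y (star x z)) →
      ∀ bullet : (TensorProduct K g A) →ₗ[K] (TensorProduct K g A) →ₗ[K]
          (TensorProduct K g A),
        (∀ (x y : g) (a b : A),
          bullet (TensorProduct.tmul K x a) (TensorProduct.tmul K y b) =
            TensorProduct.tmul K (star x y) (mulA a b)) →
        ∀ X Y Z : TensorProduct K g A,
          bullet (bullet X Y) Z - bullet X (bullet Y Z) =
            bullet (bullet Y X) Z - bullet Y (bullet X Z)) := by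
  constructor
  · rintro ⟨hassoc, hperm⟩ g _ _ star hstar bullet hb X Y Z
    induction X using TensorProduct.induction_on with
    | zero => simp
    | add X X' h h' =>
      simp only [map_add, LinearMap.add_apply]
      rw [add_sub_add_comm, add_sub_add_comm, h, h']
    | tmul x a =>
      induction Y using TensorProduct.induction_on with
      | zero => simp
      | add Y Y' h h' =>
        simp only [map_add, LinearMap.add_apply]
        rw [add_sub_add_comm, add_sub_add_comm, h, h']
      | tmul y b =>
        induction Z using TensorProduct.induction_on with
        | zero => simp
        | add Z Z' h h' =>
          simp only [map_add]
          rw [add_sub_add_comm, add_sub_add_comm, h, h']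
        | tmul z c =>
          simp only [hb]
          rw [hassoc a b c, hassoc b a c, hperm b a c, ← TensorProduct.sub_tmul,
            ← TensorProduct.sub_tmul, hstar]
  · intro H
    have key := fun a b c : A =>
      H (Fin 10 → K) (testStar K) (testStar_preLie K) (TensorProduct.map₂ (testStar K) mulA)
        (fun x y a b => by simp)
        (TensorProduct.tmul K (Pi.single 0 1) a) (TensorProduct.tmul K (Pi.single 1 1) b)
        (TensorProduct.tmul K (Pi.single 2 1) c)
    -- `coeff i` reads off the `A`-valued coefficient of the `i`-th basis vector.
    let coeff : Fin 10 → TensorProduct K (Fin 10 → K) A →ₗ[K] A := fun i =>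
      (TensorProduct.lid K A).toLinearMap ∘ₗ LinearMap.rTensor A (LinearMap.proj i)
    have h7 : ∀ a b c : A, mulA (mulA a b) c = mulA a (mulA b c) := fun a b c => by
      have h := congrArg (coeff 7) (key a b c)
      simpa [coeff, testStar, sub_eq_zero] using h
    have h9 : ∀ a b c : A, mulA (mulA a b) c = mulA b (mulA a c) := fun a b c => by
      have h := congrArg (coeff 9) (key a b c)
      simpa [coeff, testStar] using h
    exact ⟨h7, fun a b c => (h7 a b c).symm.trans (h9 a b c)⟩
end

section
/- Let V be a K-vector space equipped with a bilinear product ⋆, and let I be a set containing at least three distinct elements. Let D be the K-vector space of finitely supported functions from I to V (the direct sum of copies of V indexed by I), write v_i ∈ D for the element supported at i ∈ I with value v ∈ V, and let B : D × D → D be the unique bilinear map satisfying B(v_i, w_j) = (v⋆w)_j − (w⋆v)_i for all v, w ∈ V and i, j ∈ I. Then B satisfies the Jacobi identity B(x,B(y,z)) + B(y,B(z,x)) + B(z,B(x,y)) = 0 for all x, y, z ∈ D if and only if ⋆ is pre-Lie. -/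
/-!
Expanding the Jacobi sum on generators `x_i, y_j, z_k` gives a sum of three elements supported at
`i`, `j` and `k`; the one at `k` has value minus the pre-Lie defect
`((x⋆y)⋆z − x⋆(y⋆z)) − ((y⋆x)⋆z − y⋆(x⋆z))`, and those at `i` and `j` are its cyclic permutations
(`jacobi_single`). If `⋆` is pre-Lie, all three vanish and trilinearity gives the identity on all
of `D`. Conversely, for distinct `i, j, k`, evaluating the Jacobi sum at `k` isolates one defect.
-/

/-- The Jacobi sum on three generators, with the pre-Lie defect collected at each index. -/
theorem jacobi_single {K : Type*} [Field K] {V : Type*}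
    [AddCommGroup V] [Module K V] (star : V →ₗ[K] V →ₗ[K] V) {I : Type*}
    (B : (I →₀ V) →ₗ[K] (I →₀ V) →ₗ[K] (I →₀ V))
    (hB : ∀ (v w : V) (i j : I),
      B (Finsupp.single i v) (Finsupp.single j w) =
        Finsupp.single j (star v w) - Finsupp.single i (star w v))
    (x y z : V) (i j k : I) :
    B (Finsupp.single i x) (B (Finsupp.single j y) (Finsupp.single k z)) +
      B (Finsupp.single j y) (B (Finsupp.single k z) (Finsupp.single i x)) +
      B (Finsupp.single k z) (B (Finsupp.single i x) (Finsupp.single j y)) =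
    Finsupp.single i ((star (star z y) x - star z (star y x)) -
        (star (star y z) x - star y (star z x))) +
      Finsupp.single j ((star (star x z) y - star x (star z y)) -
        (star (star z x) y - star z (star x y))) +
      Finsupp.single k ((star (star y x) z - star y (star x z)) -
        (star (star x y) z - star x (star y z))) := by
  simp only [hB, map_sub, Finsupp.single_sub]
  abel

theorem stmt_17 {K : Type*} [Field K] [CharZero K] {V : Type*}
    [AddCommGroup V] [Module K V] (star : V →ₗ[K] V →ₗ[K] V)
    {I : Type*} (h3 : ∃ i j k : I, i ≠ j ∧ j ≠ k ∧ i ≠ k)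
    (B : (I →₀ V) →ₗ[K] (I →₀ V) →ₗ[K] (I →₀ V))
    (hB : ∀ (v w : V) (i j : I),
      B (Finsupp.single i v) (Finsupp.single j w) =
        Finsupp.single j (star v w) - Finsupp.single i (star w v)) :
    (∀ x y z : I →₀ V, B x (B y z) + B y (B z x) + B z (B x y) = 0) ↔
    (∀ x y z : V, star (star x y) z - star x (star y z) =
      star (star y x) z - star y (star x z)) := by
  constructor
  · intro h x y z
    obtain ⟨i, j, k, -, hjk, hik⟩ := h3
    have e := jacobi_single star B hB x y z i j k
    rw [h] at e
    have ek := DFunLike.congr_fun e k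
    simp only [Finsupp.add_apply, Finsupp.single_eq_same, Finsupp.single_eq_of_ne hjk.symm,
      Finsupp.single_eq_of_ne hik.symm, Finsupp.coe_zero, Pi.zero_apply, zero_add] at ek
    exact (sub_eq_zero.mp ek.symm).symm
  · intro h x y z
    induction x using Finsupp.induction_linear with
    | zero => simp
    | add x₁ x₂ h₁ h₂ =>
      have e := congrArg₂ (· + ·) h₁ h₂
      simp only [add_zero] at e
      rw [← e]
      simp only [map_add, LinearMap.add_apply]
      abel
    | single i x =>
      induction y using Finsupp.induction_linear with
      | zero => simp
      | add y₁ y₂ h₁ h₂ =>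
        have e := congrArg₂ (· + ·) h₁ h₂
        simp only [add_zero] at e
        rw [← e]
        simp only [map_add, LinearMap.add_apply]
        abel
      | single j y =>
        induction z using Finsupp.induction_linear with
        | zero => simp
        | add z₁ z₂ h₁ h₂ =>
          have e := congrArg₂ (· + ·) h₁ h₂
          simp only [add_zero] at e
          rw [← e]
          simp only [map_add, LinearMap.add_apply]
          abel
        | single k z =>
          rw [jacobi_single star B hB, h z y x, h x z y, h y x z]
          simp
end
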